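/- arXiv:2202.07753 — 3 statements merged into one kernel-verified Lean document; each statement's English description precedes it below -/
import Mathlib

section
/- For i = 1, 2, let (f_i, a_i, ρ_i, Z_i, π_i) be as in the two-parameter one-dimensional explicit invariant density setup, let h : ℝ → ℝ be continuous with |h(y)| ≤ K(1+|y|^m), set h̄₂ = ∫_ℝ h π₂ dy and F(y) = ∫_{−∞}^y (h(s) − h̄₂)π₂(s) ds, and let v be the explicit Poisson solution for the pair (f₂, a₂), i.e. v'(y) = F(y)/(a₂(y)π₂(y)) and v''(y) = (h(y) − h̄₂)/a₂(y) − f₂(y)F(y)/(a₂(y)²π₂(y)). Then ∫_ℝ ( f₁(y)v'(y) + a₁(y)v''(y) ) π₁(y) dy = 0; that is, the generator with the first pair of coefficients, applied to the Poisson solution associated with the second pair, integrates to zero against the invariant density of the first pair. -/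
open MeasureTheory

noncomputable section

/-- The explicit (unnormalized) one-dimensional invariant density
`ρ(y) = a(y)⁻¹ exp(∫₀^y f(s)/a(s) ds)`. -/
def rho1 (a f : ℝ → ℝ) (y : ℝ) : ℝ :=
  (a y)⁻¹ * Real.exp (∫ s in (0:ℝ)..y, f s / a s)

/-- The normalizing constant `Z = ∫_ℝ ρ(y) dy`. -/
def Z1 (a f : ℝ → ℝ) : ℝ := ∫ y, rho1 a f y

/-- The normalized invariant density `π = ρ / Z`. -/
def piDen (a f : ℝ → ℝ) (y : ℝ) : ℝ := rho1 a f y / Z1 a f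

/-- The average `h̄ = ∫_ℝ h(y) π(y) dy`. -/
def hbar (a f h : ℝ → ℝ) : ℝ := ∫ y, h y * piDen a f y

/-- `F(y) = ∫_{−∞}^y (h(s) − h̄) π(s) ds`. -/
def Fint (a f h : ℝ → ℝ) (y : ℝ) : ℝ :=
  ∫ s in Set.Iic y, (h s - hbar a f h) * piDen a f s

/-- The explicit solution `v(y) = ∫₀^y F(s)/(a(s)π(s)) ds` of the one-dimensional
Poisson equation `a v'' + f v' = h − h̄`. -/
def vsol (a f h : ℝ → ℝ) (y : ℝ) : ℝ :=
  ∫ s in (0:ℝ)..y, Fint a f h s / (a s * piDen a f s)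

/-- Exponential weight `E(y) = exp(∫₀^y f/a)`. -/
def Ew (a f : ℝ → ℝ) (y : ℝ) : ℝ := Real.exp (∫ s in (0:ℝ)..y, f s / a s)

lemma Ew_decay (a f : ℝ → ℝ) (lm lp β C R : ℝ) (hac : Continuous a) (hfc : Continuous f)
    (hlm : 0 < lm) (hbnd : ∀ y, lm ≤ a y ∧ a y ≤ lp) (hβ : 0 < β) (hC : 0 < C)
    (hdis : ∀ y, f y * y ≤ -β * y ^ 2 + C) (hR1 : 1 ≤ R) (hR2 : (C + 2 * lp) / β ≤ R)
    (y s : ℝ) (hy : R ≤ y) (hs : y ≤ s) :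
    Ew a f s ≤ Ew a f y * Real.exp (2 * (y - s)) := by
  have ha0 : ∀ t, 0 < a t := fun t => hlm.trans_le (hbnd t).1
  have hc : Continuous fun t => f t / a t := hfc.div hac fun t => (ha0 t).ne'
  have hii : ∀ u v, IntervalIntegrable (fun t => f t / a t) volume u v :=
    fun u v => hc.intervalIntegrable u v
  unfold Ew
  rw [← Real.exp_add, Real.exp_le_exp,
    ← intervalIntegral.integral_add_adjacent_intervals (hii 0 y) (hii y s)]
  have : ∫ t in y..s, f t / a t ≤ ∫ t in y..s, (-2 : ℝ) := by
    apply intervalIntegral.integral_mono_on hs (hii y s) (by simp)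
    intro t ht
    have ht1 : R ≤ t := hy.trans ht.1
    have h1 : 1 ≤ t := hR1.trans ht1
    rw [div_le_iff₀ (ha0 t)]
    have h2 : C + 2 * lp ≤ R * β := (div_le_iff₀ hβ).1 hR2
    have h3 : f t ≤ -β * t + C := by
      by_contra hcon
      push Not at hcon
      have := hdis t
      nlinarith
    have h4 := (hbnd t).2
    nlinarith
  rw [intervalIntegral.integral_const, smul_eq_mul] at this
  linarith

lemma Ew_refl (a f : ℝ → ℝ) (y : ℝ) :
    Ew (fun t => a (-t)) (fun t => - f (-t)) y = Ew a f (-y) := by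
  unfold Ew
  congr 1
  have := intervalIntegral.integral_comp_neg (fun t => f t / a t) (a := 0) (b := y)
  rw [neg_zero] at this
  rw [intervalIntegral.integral_symm (-y) 0, ← this, ← intervalIntegral.integral_neg]
  congr 1
  ext t
  ring

lemma Ew_decay_neg (a f : ℝ → ℝ) (lm lp β C R : ℝ) (hac : Continuous a) (hfc : Continuous f)
    (hlm : 0 < lm) (hbnd : ∀ y, lm ≤ a y ∧ a y ≤ lp) (hβ : 0 < β) (hC : 0 < C)
    (hdis : ∀ y, f y * y ≤ -β * y ^ 2 + C) (hR1 : 1 ≤ R) (hR2 : (C + 2 * lp) / β ≤ R)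
    (y s : ℝ) (hy : R ≤ y) (hs : y ≤ s) :
    Ew a f (-s) ≤ Ew a f (-y) * Real.exp (2 * (y - s)) := by
  have := Ew_decay (fun t => a (-t)) (fun t => - f (-t)) lm lp β C R (by fun_prop) (by fun_prop)
    hlm (fun t => hbnd (-t)) hβ hC (fun t => by have := hdis (-t); nlinarith) hR1 hR2 y s hy hs
  rwa [Ew_refl, Ew_refl] at this

/-- tail estimate -/
lemma tail_est (E q w : ℝ → ℝ) (R D k : ℝ) (hR : 0 ≤ R)
    (hq : Continuous q) (hw : Continuous w) (hqb : ∀ s, |q s| ≤ D * Real.exp |s|)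
    (hD : 0 ≤ D) (hk : 0 ≤ k)
    (hE : ∀ y s, R ≤ y → y ≤ s → E s ≤ E y * Real.exp (2 * (y - s)))
    (hwb : ∀ s, |w s| ≤ k * E s) (y : ℝ) (hy : R ≤ y) :
    IntegrableOn (fun s => q s * w s) (Set.Ioi y) ∧
      |∫ s in Set.Ioi y, q s * w s| ≤ D * k * E y * Real.exp y := by
  have hb : ∀ s ∈ Set.Ioi y, ‖q s * w s‖ ≤ D * k * E y * Real.exp (2 * y) * Real.exp (-s) := by
    intro s hs
    have hs' : y ≤ s := le_of_lt hs
    have h0 : |s| = s := abs_of_nonneg (by linarith)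
    have h1 := hqb s
    rw [h0] at h1
    have h2 : |w s| ≤ k * (E y * Real.exp (2 * (y - s))) :=
      (hwb s).trans (mul_le_mul_of_nonneg_left (hE y s hy hs') hk)
    rw [norm_mul, Real.norm_eq_abs, Real.norm_eq_abs]
    calc |q s| * |w s| ≤ (D * Real.exp s) * (k * (E y * Real.exp (2 * (y - s)))) :=
          mul_le_mul h1 h2 (abs_nonneg _) (by positivity)
      _ = D * k * E y * (Real.exp s * Real.exp (2 * (y - s))) := by ring
      _ = D * k * E y * Real.exp (2 * y) * Real.exp (-s) := by
          rw [mul_assoc (D * k * E y), ← Real.exp_add, ← Real.exp_add]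
          congr 2
          ring
  have hint : IntegrableOn (fun s => D * k * E y * Real.exp (2 * y) * Real.exp (-s)) (Set.Ioi y) :=
    (integrableOn_exp_neg_Ioi y).const_mul _
  have hae := (ae_restrict_mem (μ := volume) (measurableSet_Ioi (a := y))).mono hb
  refine ⟨hint.mono' (hq.mul hw).aestronglyMeasurable hae, ?_⟩
  have := norm_integral_le_of_norm_le hint hae
  rw [integral_const_mul, integral_exp_neg_Ioi, mul_assoc (D * k * E y), ← Real.exp_add] at this
  rw [Real.norm_eq_abs] at this
  convert this using 3
  ring

lemma tail_est_neg (E q w : ℝ → ℝ) (R D k : ℝ) (hR : 0 ≤ R)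
    (hq : Continuous q) (hw : Continuous w) (hqb : ∀ s, |q s| ≤ D * Real.exp |s|)
    (hD : 0 ≤ D) (hk : 0 ≤ k)
    (hE : ∀ y s, R ≤ y → y ≤ s → E (-s) ≤ E (-y) * Real.exp (2 * (y - s)))
    (hwb : ∀ s, |w s| ≤ k * E s) (y : ℝ) (hy : R ≤ y) :
    IntegrableOn (fun s => q s * w s) (Set.Iic (-y)) ∧
      |∫ s in Set.Iic (-y), q s * w s| ≤ D * k * E (-y) * Real.exp y := by
  obtain ⟨h1, h2⟩ := tail_est (fun s => E (-s)) (fun s => q (-s)) (fun s => w (-s)) R D k hR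
    (by fun_prop) (by fun_prop) (fun s => by simpa using hqb (-s)) hD hk hE (fun s => hwb (-s)) y hy
  rw [integral_comp_neg_Ioi y (fun s => q s * w s)] at h2
  refine ⟨?_, h2⟩
  have h3 := (integrableOn_Ici_iff_integrableOn_Ioi).2 h1
  have h4 := IntegrableOn.comp_neg_Iic (c := -y) (by simpa only [neg_neg] using h3)
  simpa only [neg_neg] using h4

/-- global integrability -/
lemma glob_int (E q w : ℝ → ℝ) (R D k : ℝ) (hR : 0 ≤ R)
    (hq : Continuous q) (hw : Continuous w) (hqb : ∀ s, |q s| ≤ D * Real.exp |s|)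
    (hD : 0 ≤ D) (hk : 0 ≤ k)
    (hE : ∀ y s, R ≤ y → y ≤ s → E s ≤ E y * Real.exp (2 * (y - s)))
    (hE' : ∀ y s, R ≤ y → y ≤ s → E (-s) ≤ E (-y) * Real.exp (2 * (y - s)))
    (hwb : ∀ s, |w s| ≤ k * E s) : Integrable (fun s => q s * w s) := by
  have h1 := (tail_est E q w R D k hR hq hw hqb hD hk hE hwb R le_rfl).1
  have h2 := (tail_est_neg E q w R D k hR hq hw hqb hD hk hE' hwb R le_rfl).1
  have h3 : IntegrableOn (fun s => q s * w s) (Set.Icc (-R) R) :=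
    (hq.mul hw).continuousOn.integrableOn_Icc
  rw [← integrableOn_univ]
  refine ((h2.union h3).union h1).mono_set ?_
  intro x _
  by_cases hx : x ≤ -R
  · exact Or.inl (Or.inl hx)
  by_cases hx2 : x ≤ R
  · exact Or.inl (Or.inr ⟨by linarith, hx2⟩)
  · exact Or.inr (not_le.1 hx2)

lemma Ew_hasDerivAt (a f : ℝ → ℝ) (hac : Continuous a) (hfc : Continuous f)
    (ha0 : ∀ t, 0 < a t) (y : ℝ) : HasDerivAt (Ew a f) (Ew a f y * (f y / a y)) y := by
  have hc : Continuous fun t => f t / a t := hfc.div hac fun t => (ha0 t).ne'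
  exact (intervalIntegral.integral_hasDerivAt_right (hc.intervalIntegrable 0 y)
    (hc.stronglyMeasurableAtFilter _ _) hc.continuousAt).exp

lemma rho_bound (a f : ℝ → ℝ) (lm : ℝ) (hlm : 0 < lm) (hl : ∀ y, lm ≤ a y) (s : ℝ) :
    |rho1 a f s| ≤ lm⁻¹ * Ew a f s := by
  have h1 : 0 < a s := hlm.trans_le (hl s)
  have : rho1 a f s = (a s)⁻¹ * Ew a f s := rfl
  have hE : 0 < Ew a f s := Real.exp_pos _
  rw [this, abs_of_pos (by positivity)]
  gcongr
  exact hl s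

lemma rho_cont (a f : ℝ → ℝ) (hac : Continuous a) (hfc : Continuous f)
    (ha0 : ∀ t, 0 < a t) : Continuous (rho1 a f) := by
  have h : Continuous (Ew a f) :=
    continuous_iff_continuousAt.2 fun y => (Ew_hasDerivAt a f hac hfc ha0 y).continuousAt
  exact (hac.inv₀ fun t => (ha0 t).ne').mul h

lemma Z_pos (a f : ℝ → ℝ)
    (ha0 : ∀ t, 0 < a t) (hint : Integrable (rho1 a f)) : 0 < Z1 a f := by
  have hp : ∀ y, 0 < rho1 a f y := fun y => mul_pos (inv_pos.2 (ha0 y)) (Real.exp_pos _)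
  unfold Z1
  rw [integral_pos_iff_support_of_nonneg (fun y => (hp y).le) hint]
  have : Function.support (rho1 a f) = Set.univ :=
    Set.eq_univ_of_forall fun y => (hp y).ne'
  rw [this]
  simp

/-- the generator with the first pair of coefficients, applied to the
explicit Poisson solution associated with the second pair, integrates to zero against
the invariant density of the first pair. -/
theorem one_dim_cross_generator_integrates_to_zero
    (a₁ a₂ f₁ f₂ h : ℝ → ℝ) (lm lp β C K : ℝ) (m : ℕ)
    (ha₁c : Continuous a₁) (ha₂c : Continuous a₂)
    (hf₁c : Continuous f₁) (hf₂c : Continuous f₂) (hhc : Continuous h)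
    (hlm : 0 < lm)
    (hbnd₁ : ∀ y, lm ≤ a₁ y ∧ a₁ y ≤ lp) (hbnd₂ : ∀ y, lm ≤ a₂ y ∧ a₂ y ≤ lp)
    (hβ : 0 < β) (hC : 0 < C)
    (hdis₁ : ∀ y, f₁ y * y ≤ -β * y ^ 2 + C) (hdis₂ : ∀ y, f₂ y * y ≤ -β * y ^ 2 + C)
    (hh : ∀ y, |h y| ≤ K * (1 + |y| ^ m)) :
    (∫ y, (f₁ y * (Fint a₂ f₂ h y / (a₂ y * piDen a₂ f₂ y)) +
        a₁ y * ((h y - hbar a₂ f₂ h) / a₂ y -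
          f₂ y * Fint a₂ f₂ h y / ((a₂ y) ^ 2 * piDen a₂ f₂ y))) * piDen a₁ f₁ y) = 0 := by
  have ha₁0 : ∀ t, 0 < a₁ t := fun t => hlm.trans_le (hbnd₁ t).1
  have ha₂0 : ∀ t, 0 < a₂ t := fun t => hlm.trans_le (hbnd₂ t).1
  obtain ⟨R, hR1, hR2⟩ : ∃ R : ℝ, 1 ≤ R ∧ (C + 2 * lp) / β ≤ R :=
    ⟨max 1 ((C + 2 * lp) / β), le_max_left _ _, le_max_right _ _⟩
  have hR0 : 0 ≤ R := by linarith
  have hE₁ := Ew_decay a₁ f₁ lm lp β C R ha₁c hf₁c hlm hbnd₁ hβ hC hdis₁ hR1 hR2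
  have hE₁n := Ew_decay_neg a₁ f₁ lm lp β C R ha₁c hf₁c hlm hbnd₁ hβ hC hdis₁ hR1 hR2
  have hE₂ := Ew_decay a₂ f₂ lm lp β C R ha₂c hf₂c hlm hbnd₂ hβ hC hdis₂ hR1 hR2
  have hE₂n := Ew_decay_neg a₂ f₂ lm lp β C R ha₂c hf₂c hlm hbnd₂ hβ hC hdis₂ hR1 hR2
  have hr₁c := rho_cont a₁ f₁ ha₁c hf₁c ha₁0
  have hr₂c := rho_cont a₂ f₂ ha₂c hf₂c ha₂0
  have hone : ∀ s : ℝ, |(1 : ℝ)| ≤ 1 * Real.exp |s| := fun s => by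
    rw [abs_one, one_mul]
    exact Real.one_le_exp (abs_nonneg s)
  have hlmi : 0 ≤ lm⁻¹ := by positivity
  have hi₁ : Integrable (rho1 a₁ f₁) := by
    simpa using glob_int (Ew a₁ f₁) (fun _ => 1) (rho1 a₁ f₁) R 1 lm⁻¹ hR0 continuous_const hr₁c
      hone zero_le_one hlmi hE₁ hE₁n (rho_bound a₁ f₁ lm hlm fun y => (hbnd₁ y).1)
  have hi₂ : Integrable (rho1 a₂ f₂) := by
    simpa using glob_int (Ew a₂ f₂) (fun _ => 1) (rho1 a₂ f₂) R 1 lm⁻¹ hR0 continuous_const hr₂c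
      hone zero_le_one hlmi hE₂ hE₂n (rho_bound a₂ f₂ lm hlm fun y => (hbnd₂ y).1)
  have hZ₁ : 0 < Z1 a₁ f₁ := Z_pos a₁ f₁ ha₁0 hi₁
  have hZ₂ : 0 < Z1 a₂ f₂ := Z_pos a₂ f₂ ha₂0 hi₂
  -- the density `π₂`
  have hpc : Continuous (piDen a₂ f₂) := hr₂c.div_const _
  have hpi : Integrable (piDen a₂ f₂) := hi₂.div_const _
  have hp1 : ∫ y, piDen a₂ f₂ y = 1 := by
    unfold piDen
    rw [integral_div]
    exact div_self hZ₂.ne'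
  have hpb : ∀ s, |piDen a₂ f₂ s| ≤ (lm⁻¹ / Z1 a₂ f₂) * Ew a₂ f₂ s := fun s => by
    unfold piDen
    rw [abs_div, abs_of_pos hZ₂, div_mul_eq_mul_div]
    gcongr
    exact rho_bound a₂ f₂ lm hlm (fun y => (hbnd₂ y).1) s
  have hk : 0 ≤ lm⁻¹ / Z1 a₂ f₂ := by positivity
  -- growth of `h`
  have hK : 0 ≤ K := by
    have h0 := (abs_nonneg _).trans (hh 1)
    simp at h0
    linarith
  have hhe : ∀ s, |h s| ≤ (K * (1 + m.factorial)) * Real.exp |s| := fun s => by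
    refine (hh s).trans ?_
    rw [mul_assoc]
    refine mul_le_mul_of_nonneg_left ?_ hK
    have h1 := Real.one_le_exp (abs_nonneg s)
    have h2 := Real.pow_div_factorial_le_exp |s| (abs_nonneg s) m
    rw [div_le_iff₀ (by positivity)] at h2
    linarith
  have hhi : Integrable fun s => h s * piDen a₂ f₂ s :=
    glob_int (Ew a₂ f₂) h (piDen a₂ f₂) R _ _ hR0 hhc hpc hhe (by positivity) hk hE₂ hE₂n hpb
  set b := hbar a₂ f₂ h with hb
  obtain ⟨D, hD, hqb⟩ : ∃ D : ℝ, 0 ≤ D ∧ ∀ s, |h s - b| ≤ D * Real.exp |s| := by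
    refine ⟨K * (1 + m.factorial) + |b|, by positivity, fun s => ?_⟩
    have h1 := Real.one_le_exp (abs_nonneg s)
    have h2 := hhe s
    have h3 := abs_sub (h s) b
    have h4 := mul_le_mul_of_nonneg_left h1 (abs_nonneg b)
    linarith
  have hqc : Continuous fun s => h s - b := by fun_prop
  have hqi : Integrable fun s => (h s - b) * piDen a₂ f₂ s :=
    glob_int (Ew a₂ f₂) _ (piDen a₂ f₂) R _ _ hR0 hqc hpc hqb hD hk hE₂ hE₂n hpb
  have hq0 : ∫ s, (h s - b) * piDen a₂ f₂ s = 0 := by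
    simp only [sub_mul]
    rw [integral_sub hhi (hpi.const_mul _), integral_const_mul, hp1, hb]
    unfold hbar
    ring
  -- estimates of `F`
  have hFtop : ∀ y, R ≤ y →
      |Fint a₂ f₂ h y| ≤ D * (lm⁻¹ / Z1 a₂ f₂) * Ew a₂ f₂ y * Real.exp y := fun y hy => by
    have h1 := (tail_est (Ew a₂ f₂) _ (piDen a₂ f₂) R _ _ hR0 hqc hpc hqb hD hk hE₂ hpb y hy).2
    have h2 := intervalIntegral.integral_Iic_add_Ioi (b := y) hqi.integrableOn hqi.integrableOn
    rw [hq0] at h2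
    have h3 : Fint a₂ f₂ h y = -∫ s in Set.Ioi y, (h s - b) * piDen a₂ f₂ s := by
      unfold Fint
      linarith
    rw [h3, abs_neg]
    exact h1
  have hFbot : ∀ y, R ≤ y →
      |Fint a₂ f₂ h (-y)| ≤ D * (lm⁻¹ / Z1 a₂ f₂) * Ew a₂ f₂ (-y) * Real.exp y := fun y hy =>
    (tail_est_neg (Ew a₂ f₂) _ (piDen a₂ f₂) R _ _ hR0 hqc hpc hqb hD hk hE₂n hpb y hy).2
  have hFd : ∀ y, HasDerivAt (Fint a₂ f₂ h) ((h y - b) * piDen a₂ f₂ y) y := fun y => by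
    have hc : Continuous fun s => (h s - b) * piDen a₂ f₂ s := hqc.mul hpc
    have h1 := (intervalIntegral.integral_hasDerivAt_right (hc.intervalIntegrable 0 y)
      (hc.stronglyMeasurableAtFilter _ _) hc.continuousAt).const_add (Fint a₂ f₂ h 0)
    have h2 : Fint a₂ f₂ h =
        fun u => Fint a₂ f₂ h 0 + ∫ s in (0:ℝ)..u, (h s - b) * piDen a₂ f₂ s := by
      ext u
      have h3 := intervalIntegral.integral_Iic_sub_Iic (a := 0) (b := u)
        hqi.integrableOn hqi.integrableOn
      unfold Fint
      linarith
    rw [h2]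
    exact h1
  have hEpos₁ : ∀ y, 0 < Ew a₁ f₁ y := fun y => Real.exp_pos _
  have hEpos₂ : ∀ y, 0 < Ew a₂ f₂ y := fun y => Real.exp_pos _
  have hpi₁ : ∀ y, piDen a₁ f₁ y = (a₁ y)⁻¹ * Ew a₁ f₁ y / Z1 a₁ f₁ := fun y => rfl
  have hpi₂ : ∀ y, piDen a₂ f₂ y = (a₂ y)⁻¹ * Ew a₂ f₂ y / Z1 a₂ f₂ := fun y => rfl
  -- the primitive
  set κ : ℝ := Z1 a₂ f₂ / Z1 a₁ f₁ with hκ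
  have hκ0 : 0 < κ := div_pos hZ₂ hZ₁
  let W : ℝ → ℝ := fun y => κ * (Ew a₁ f₁ y * Fint a₂ f₂ h y / Ew a₂ f₂ y)
  have hbd : ∀ (y M : ℝ) (z : ℝ), Ew a₁ f₁ z ≤ M * Real.exp (2 * (R - y)) →
      |Fint a₂ f₂ h z| ≤ D * (lm⁻¹ / Z1 a₂ f₂) * Ew a₂ f₂ z * Real.exp y →
      ‖W z‖ ≤ κ * M * D * (lm⁻¹ / Z1 a₂ f₂) * Real.exp (2 * R) * Real.exp (-y) := by
    intro y M z h1 h2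
    simp only [W]
    rw [Real.norm_eq_abs, abs_mul, abs_of_pos hκ0, abs_div, abs_mul, abs_of_pos (hEpos₁ z),
      abs_of_pos (hEpos₂ z)]
    have h3 := mul_le_mul h1 h2 (abs_nonneg _) ((hEpos₁ z).le.trans h1)
    have h4 : Ew a₁ f₁ z * |Fint a₂ f₂ h z| / Ew a₂ f₂ z ≤
        M * D * (lm⁻¹ / Z1 a₂ f₂) * (Real.exp (2 * (R - y)) * Real.exp y) := by
      rw [div_le_iff₀ (hEpos₂ z)]
      refine h3.trans (le_of_eq ?_)
      ring
    have h5 : Real.exp (2 * (R - y)) * Real.exp y = Real.exp (2 * R) * Real.exp (-y) := by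
      rw [← Real.exp_add, ← Real.exp_add]
      congr 1
      ring
    rw [h5] at h4
    refine (mul_le_mul_of_nonneg_left h4 hκ0.le).trans (le_of_eq ?_)
    ring
  have hlim : ∀ c : ℝ, Filter.Tendsto (fun y : ℝ => c * Real.exp (-y)) Filter.atTop (nhds 0) :=
    fun c => by
      simpa using (Real.tendsto_exp_neg_atTop_nhds_zero).const_mul c
  have hWtop : Filter.Tendsto W Filter.atTop (nhds 0) := by
    refine squeeze_zero_norm' ?_ (hlim (κ * Ew a₁ f₁ R * D * (lm⁻¹ / Z1 a₂ f₂) * Real.exp (2 * R)))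
    filter_upwards [Filter.eventually_ge_atTop R] with y hy
    exact hbd y _ y (hE₁ R y le_rfl hy) (hFtop y hy)
  have hWbot : Filter.Tendsto W Filter.atBot (nhds 0) := by
    have h1 : Filter.Tendsto (fun y => W (-y)) Filter.atTop (nhds 0) := by
      refine squeeze_zero_norm' ?_
        (hlim (κ * Ew a₁ f₁ (-R) * D * (lm⁻¹ / Z1 a₂ f₂) * Real.exp (2 * R)))
      filter_upwards [Filter.eventually_ge_atTop R] with y hy
      exact hbd y _ (-y) (hE₁n R y le_rfl hy) (hFbot y hy)
    simpa [Function.comp_def] using h1.comp Filter.tendsto_neg_atBot_atTop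
  by_cases hint : Integrable (fun y => (f₁ y * (Fint a₂ f₂ h y / (a₂ y * piDen a₂ f₂ y)) +
        a₁ y * ((h y - b) / a₂ y -
          f₂ y * Fint a₂ f₂ h y / ((a₂ y) ^ 2 * piDen a₂ f₂ y))) * piDen a₁ f₁ y)
  swap
  · exact integral_undef hint
  have := integral_of_hasDerivAt_of_tendsto (f := W) (fun y => ?_) hint hWbot hWtop
  · rw [this, sub_zero]
  have hd := (((Ew_hasDerivAt a₁ f₁ ha₁c hf₁c ha₁0 y).mul (hFd y)).div
    (Ew_hasDerivAt a₂ f₂ ha₂c hf₂c ha₂0 y) (hEpos₂ y).ne').const_mul κ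
  refine hd.congr_deriv ?_
  have e1 := (ha₁0 y).ne'
  have e2 := (ha₂0 y).ne'
  have e3 := (hEpos₁ y).ne'
  have e4 := (hEpos₂ y).ne'
  have e5 := hZ₁.ne'
  have e6 := hZ₂.ne'
  rw [hpi₁, hpi₂, hκ]
  simp only [Pi.mul_apply]
  field_simp
  ring

end
end

section
/- For i = 1, 2, let (f_i, a_i, ρ_i, Z_i, π_i) be as in the two-parameter one-dimensional explicit invariant density setup, let h₁, h₂ : ℝ → ℝ be continuous with |h_i(y)| ≤ K(1+|y|^m), set h̄₂ = ∫_ℝ h₂ π₂ dy and F(y) = ∫_{−∞}^y (h₂(s) − h̄₂)π₂(s) ds, and let v be the explicit Poisson solution for (f₂, a₂) with data h₂, i.e. v'(y) = F(y)/(a₂(y)π₂(y)) and v''(y) = (h₂(y) − h̄₂)/a₂(y) − f₂(y)F(y)/(a₂(y)²π₂(y)). Then ∫_ℝ h₁(y)π₁(y) dy − ∫_ℝ h₂(y)π₂(y) dy = ∫_ℝ [ h₁(y) − h₂(y) − ( (f₁(y) − f₂(y)) v'(y) + (a₁(y) − a₂(y)) v''(y) ) ] π₁(y) dy. -/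
open MeasureTheory

noncomputable section

open Filter Topology Set in
lemma aux_nonneg {φ φ' : ℝ → ℝ} {R : ℝ} (hd : ∀ y, HasDerivAt φ (φ' y) y)
    (hn : ∀ y, R ≤ y → φ' y ≤ 0) (hl : Tendsto φ atTop (𝓝 0)) :
    ∀ y, R ≤ y → 0 ≤ φ y := by
  have hanti : AntitoneOn φ (Ici R) := by
    apply antitoneOn_of_deriv_nonpos (convex_Ici R)
    · exact fun y _ => (hd y).continuousAt.continuousWithinAt
    · exact fun y _ => (hd y).differentiableAt.differentiableWithinAt
    · intro y hy
      rw [interior_Ici] at hy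
      rw [(hd y).deriv]
      exact hn y (le_of_lt hy)
  intro y hy
  refine le_of_tendsto hl ?_
  filter_upwards [eventually_ge_atTop y] with z hz
  exact hanti hy (le_trans hy hz) hz

open Filter Topology Set in
lemma aux_E {E r : ℝ → ℝ} {R : ℝ} (hE : ∀ y, 0 < E y) (hrc : Continuous r)
    (hd : ∀ y, HasDerivAt E (r y * E y) y) (hr : ∀ y, R ≤ y → r y ≤ -3) :
    Tendsto (fun y => Real.exp y * E y) atTop (𝓝 0) ∧
    IntegrableOn (fun y => Real.exp y * E y) (Ioi R) ∧
    IntegrableOn (fun y => Real.exp y * (r y * E y)) (Ioi R) := by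
  have hEc : Continuous E := continuous_iff_continuousAt.2 fun y => (hd y).continuousAt
  have hanti : AntitoneOn (fun y => Real.exp (2 * y) * E y) (Ici R) := by
    have hd2 : ∀ y, HasDerivAt (fun y => Real.exp (2 * y) * E y)
        (Real.exp (2 * y) * E y * (2 + r y)) y := by
      intro y
      have h1 : HasDerivAt (fun y : ℝ => Real.exp (2 * y)) (Real.exp (2 * y) * (2 * 1)) y :=
        ((hasDerivAt_id y).const_mul 2).exp
      refine (h1.mul (hd y)).congr_deriv ?_
      ring
    apply antitoneOn_of_deriv_nonpos (convex_Ici R)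
    · exact fun y _ => (hd2 y).continuousAt.continuousWithinAt
    · exact fun y _ => (hd2 y).differentiableAt.differentiableWithinAt
    · intro y hy
      rw [interior_Ici] at hy
      rw [(hd2 y).deriv]
      have := hr y (le_of_lt hy)
      have h3 : 0 < Real.exp (2 * y) * E y := mul_pos (Real.exp_pos _) (hE y)
      nlinarith
  have hlim : Tendsto (fun y => Real.exp y * E y) atTop (𝓝 0) := by
    have hb : Tendsto (fun y : ℝ => (Real.exp (2 * R) * E R) * Real.exp (-y)) atTop (𝓝 0) := by
      simpa using (Real.tendsto_exp_neg_atTop_nhds_zero).const_mul (Real.exp (2 * R) * E R)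
    refine squeeze_zero' (Eventually.of_forall fun y => (mul_pos (Real.exp_pos _) (hE y)).le) ?_ hb
    filter_upwards [eventually_ge_atTop R] with y hy
    have h := hanti (self_mem_Ici : R ∈ Ici R) hy hy
    have h4 : Real.exp y * E y = (Real.exp (2 * y) * E y) * Real.exp (-y) := by
      rw [mul_right_comm, ← Real.exp_add]; congr 2; ring
    rw [h4]
    exact mul_le_mul_of_nonneg_right h (Real.exp_pos _).le
  have hd1 : ∀ y, HasDerivAt (fun y => Real.exp y * E y) (Real.exp y * E y * (1 + r y)) y := by
    intro y
    refine ((Real.hasDerivAt_exp y).mul (hd y)).congr_deriv ?_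
    ring
  have hint : IntegrableOn (fun y => Real.exp y * E y * (1 + r y)) (Ioi R) := by
    refine integrableOn_Ioi_deriv_of_nonpos' (fun y _ => hd1 y) ?_ hlim
    intro y hy
    have := hr y (le_of_lt hy)
    have h3 : 0 < Real.exp y * E y := mul_pos (Real.exp_pos _) (hE y)
    nlinarith
  refine ⟨hlim, ?_, ?_⟩
  · refine Integrable.mono hint (by fun_prop) ?_
    refine (ae_restrict_iff' measurableSet_Ioi).2 (Eventually.of_forall fun y hy => ?_)
    have := hr y (le_of_lt hy)
    have h3 : 0 < Real.exp y * E y := mul_pos (Real.exp_pos _) (hE y)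
    rw [Real.norm_eq_abs, Real.norm_eq_abs, abs_mul _ (1 + r y), abs_of_pos h3,
      abs_of_nonpos (by linarith : 1 + r y ≤ 0)]
    nlinarith
  · refine Integrable.mono (hint.const_mul 2) (by fun_prop) ?_
    refine (ae_restrict_iff' measurableSet_Ioi).2 (Eventually.of_forall fun y hy => ?_)
    have := hr y (le_of_lt hy)
    have h3 : 0 < Real.exp y * E y := mul_pos (Real.exp_pos _) (hE y)
    have h5 : Real.exp y * (r y * E y) = (Real.exp y * E y) * r y := by ring
    rw [Real.norm_eq_abs, Real.norm_eq_abs, h5, abs_mul 2, abs_mul _ (1 + r y),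
      abs_mul _ (r y), abs_of_pos h3,
      abs_of_nonpos (by linarith : 1 + r y ≤ 0), abs_of_nonpos (by linarith : r y ≤ 0), abs_two]
    nlinarith

open Filter Topology Set in
lemma aux_half {E₁ E₂ r₁ r₂ g W : ℝ → ℝ} {R A : ℝ} (hE₁ : ∀ y, 0 < E₁ y) (hE₂ : ∀ y, 0 < E₂ y)
    (hrc₁ : Continuous r₁) (hrc₂ : Continuous r₂)
    (hd₁ : ∀ y, HasDerivAt E₁ (r₁ y * E₁ y) y) (hd₂ : ∀ y, HasDerivAt E₂ (r₂ y * E₂ y) y)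
    (hr₁ : ∀ y, R ≤ y → r₁ y ≤ -3) (hr₂ : ∀ y, R ≤ y → r₂ y ≤ -3)
    (hg : ∀ y, R ≤ y → |g y| ≤ A * Real.exp y)
    (hW : ∀ y, HasDerivAt W (g y * E₂ y) y) (hWl : Tendsto W atTop (𝓝 0)) :
    Tendsto (fun y => W y / E₂ y * E₁ y) atTop (𝓝 0) ∧
    IntegrableOn (fun y => W y / E₂ y * (r₁ y * E₁ y)) (Ioi R) ∧
    IntegrableOn (fun y => W y / E₂ y * (r₂ y * E₁ y)) (Ioi R) := by
  have hEc₁ : Continuous E₁ := continuous_iff_continuousAt.2 fun y => (hd₁ y).continuousAt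
  have hEc₂ : Continuous E₂ := continuous_iff_continuousAt.2 fun y => (hd₂ y).continuousAt
  have hWc : Continuous W := continuous_iff_continuousAt.2 fun y => (hW y).continuousAt
  have hEn₂ : ∀ y, E₂ y ≠ 0 := fun y => (hE₂ y).ne'
  obtain ⟨l1, i1, j1⟩ := aux_E hE₁ hrc₁ hd₁ hr₁
  obtain ⟨l2, i2, j2⟩ := aux_E hE₂ hrc₂ hd₂ hr₂
  have hA : 0 ≤ A := by
    have h := (abs_nonneg _).trans (hg R le_rfl)
    exact nonneg_of_mul_nonneg_left h (Real.exp_pos R)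
  set T : ℝ → ℝ := fun y => A * ((∫ s in Ioi R, Real.exp s * E₂ s) -
    ∫ s in R..y, Real.exp s * E₂ s) with hT
  have hTd : ∀ y, HasDerivAt T (-(A * (Real.exp y * E₂ y))) y := by
    intro y
    have hc : Continuous fun s => Real.exp s * E₂ s := by fun_prop
    have h := ((hc.integral_hasStrictDerivAt R y).hasDerivAt.const_sub
      (∫ s in Ioi R, Real.exp s * E₂ s)).const_mul A
    refine h.congr_deriv ?_
    ring
  have hTl : Tendsto T atTop (𝓝 0) := by
    have h := ((intervalIntegral_tendsto_integral_Ioi R i2 tendsto_id).const_sub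
      (∫ s in Ioi R, Real.exp s * E₂ s)).const_mul A
    simpa [hT] using h
  have hTc : Continuous T := continuous_iff_continuousAt.2 fun y => (hTd y).continuousAt
  have hWT : ∀ y, R ≤ y → |W y| ≤ T y := by
    intro y hy
    have hp : 0 ≤ T y - W y := by
      refine aux_nonneg (φ := fun y => T y - W y) (fun y => (hTd y).sub (hW y)) ?_ (by simpa using hTl.sub hWl) y hy
      intro z hz
      have := (abs_le.1 (hg z hz)).1
      nlinarith [hE₂ z]
    have hm : 0 ≤ T y + W y := by
      refine aux_nonneg (φ := fun y => T y + W y) (fun y => (hTd y).add (hW y)) ?_ (by simpa using hTl.add hWl) y hy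
      intro z hz
      have := (abs_le.1 (hg z hz)).2
      nlinarith [hE₂ z]
    exact abs_le.2 ⟨by linarith, by linarith⟩
  have hT0 : ∀ y, R ≤ y → 0 ≤ T y := fun y hy => (abs_nonneg _).trans (hWT y hy)
  have hTle : ∀ y, R ≤ y → T y ≤ A * (Real.exp y * E₂ y) := by
    intro y hy
    have hp : 0 ≤ A * (Real.exp y * E₂ y) - T y := by
      refine aux_nonneg (φ := fun y => A * (Real.exp y * E₂ y) - T y) (fun y =>
        ((((Real.hasDerivAt_exp y).mul (hd₂ y)).const_mul A).sub (hTd y)))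
        ?_ (by simpa using (l2.const_mul A).sub hTl) y hy
      intro z hz
      have := hr₂ z hz
      have h3 : 0 ≤ A * (Real.exp z * E₂ z) :=
        mul_nonneg hA (mul_pos (Real.exp_pos _) (hE₂ z)).le
      nlinarith
    linarith
  have hwle : ∀ y, R ≤ y → T y / E₂ y ≤ A * Real.exp y := by
    intro y hy
    rw [div_le_iff₀ (hE₂ y)]
    linarith [hTle y hy]
  have hw0 : ∀ y, R ≤ y → 0 ≤ T y / E₂ y := fun y hy => div_nonneg (hT0 y hy) (hE₂ y).le
  have hUw : ∀ y, R ≤ y → |W y / E₂ y| ≤ T y / E₂ y := by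
    intro y hy
    rw [abs_div, abs_of_pos (hE₂ y)]
    exact div_le_div_of_nonneg_right (hWT y hy) (hE₂ y).le
  have hwl : Tendsto (fun y => T y / E₂ y * E₁ y) atTop (𝓝 0) := by
    refine squeeze_zero' (g := fun y => A * (Real.exp y * E₁ y)) ?_ ?_ (by simpa using l1.const_mul A)
    · filter_upwards [eventually_ge_atTop R] with y hy
      exact mul_nonneg (hw0 y hy) (hE₁ y).le
    · filter_upwards [eventually_ge_atTop R] with y hy
      rw [← mul_assoc]
      exact mul_le_mul_of_nonneg_right (hwle y hy) (hE₁ y).le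
  have k1 : IntegrableOn (fun y => T y / E₂ y * (r₁ y * E₁ y)) (Ioi R) := by
    refine Integrable.mono (j1.const_mul A)
      (Continuous.aestronglyMeasurable (by fun_prop (disch := assumption))) ?_
    refine (ae_restrict_iff' measurableSet_Ioi).2 (Eventually.of_forall fun y hy => ?_)
    have hy' : R ≤ y := le_of_lt hy
    rw [← mul_assoc A, norm_mul, norm_mul (A * Real.exp y), Real.norm_eq_abs (T y / E₂ y),
      abs_of_nonneg (hw0 y hy')]
    exact mul_le_mul_of_nonneg_right ((hwle y hy').trans (le_abs_self _)) (norm_nonneg _)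
  have k2 : IntegrableOn (fun y => T y / E₂ y * (-r₂ y * E₁ y)) (Ioi R) := by
    have hcq : Continuous fun s => A * (Real.exp s * E₁ s) - T s / E₂ s * (r₁ s * E₁ s) := by
      fun_prop (disch := assumption)
    have hiq : IntegrableOn (fun s => A * (Real.exp s * E₁ s) - T s / E₂ s * (r₁ s * E₁ s))
      (Ioi R) := (i1.const_mul A).sub k1
    have hlq := hwl.add (intervalIntegral_tendsto_integral_Ioi R hiq tendsto_id)
    refine integrableOn_Ioi_deriv_of_nonneg' (g := fun y => T y / E₂ y * E₁ y +
      ∫ s in R..y, (A * (Real.exp s * E₁ s) - T s / E₂ s * (r₁ s * E₁ s))) ?_ ?_ hlq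
    · intro y _
      have h := (((hTd y).div (hd₂ y) (hEn₂ y)).mul (hd₁ y)).add
        (hcq.integral_hasStrictDerivAt R y).hasDerivAt
      refine h.congr_deriv ?_
      have := hEn₂ y
      try simp only [Pi.div_apply]
      field_simp
      ring
    · intro y hy
      have hy' : R ≤ y := le_of_lt hy
      have := hr₂ y hy'
      exact mul_nonneg (hw0 y hy') (mul_nonneg (by linarith) (hE₁ y).le)
  refine ⟨?_, ?_, ?_⟩
  · refine squeeze_zero_norm' ?_ hwl
    filter_upwards [eventually_ge_atTop R] with y hy
    rw [norm_mul, Real.norm_eq_abs, Real.norm_eq_abs, abs_of_pos (hE₁ y)]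
    exact mul_le_mul_of_nonneg_right (hUw y hy) (hE₁ y).le
  · refine Integrable.mono k1
      (Continuous.aestronglyMeasurable (by fun_prop (disch := assumption))) ?_
    refine (ae_restrict_iff' measurableSet_Ioi).2 (Eventually.of_forall fun y hy => ?_)
    rw [norm_mul, norm_mul (T y / E₂ y)]
    exact mul_le_mul_of_nonneg_right ((hUw y (le_of_lt hy)).trans (le_abs_self _)) (norm_nonneg _)
  · refine Integrable.mono k2
      (Continuous.aestronglyMeasurable (by fun_prop (disch := assumption))) ?_
    refine (ae_restrict_iff' measurableSet_Ioi).2 (Eventually.of_forall fun y hy => ?_)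
    rw [norm_mul, norm_mul (T y / E₂ y), neg_mul, norm_neg]
    exact mul_le_mul_of_nonneg_right ((hUw y (le_of_lt hy)).trans (le_abs_self _)) (norm_nonneg _)

open Filter Topology Set in
lemma aux_full {φ : ℝ → ℝ} {R : ℝ} (hc : Continuous φ) (h1 : IntegrableOn φ (Ioi R))
    (h2 : IntegrableOn (fun y => φ (-y)) (Ioi R)) : Integrable φ := by
  have h3 : IntegrableOn φ (Iic (-R)) := by
    rw [integrableOn_Iic_iff_integrableOn_Iio]
    have := (Measure.measurePreserving_neg (volume : Measure ℝ)).integrableOn_comp_preimage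
      (Homeomorph.neg ℝ).measurableEmbedding (f := φ) (s := Iio (-R))
    rw [← this]
    simpa [Function.comp_def] using h2
  have h4 : IntegrableOn φ (Icc (-R) R) := hc.continuousOn.integrableOn_Icc
  rw [← integrableOn_univ]
  refine ((h3.union h4).union h1).mono_set ?_
  intro y _
  rcases le_or_gt y (-R) with h | h
  · exact Or.inl (Or.inl h)
  · rcases le_or_gt y R with h' | h'
    · exact Or.inl (Or.inr ⟨h.le, h'⟩)
    · exact Or.inr h'

lemma aux_refl {E r : ℝ → ℝ} (hd : ∀ y, HasDerivAt E (r y * E y) y) (y : ℝ) :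
    HasDerivAt (fun y => E (-y)) ((-r (-y)) * E (-y)) y := by
  have h := (hd (-y)).comp y (hasDerivAt_neg y)
  refine h.congr_deriv ?_
  ring

open Filter Topology Set in
lemma aux_gE {E r g : ℝ → ℝ} {R A : ℝ} (hE : ∀ y, 0 < E y) (hrc : Continuous r)
    (hd : ∀ y, HasDerivAt E (r y * E y) y) (hr : ∀ y, R ≤ y → r y ≤ -3)
    (hr' : ∀ y, R ≤ y → -r (-y) ≤ -3) (hR : 0 ≤ R)
    (hgc : Continuous g) (hg : ∀ y, |g y| ≤ A * Real.exp |y|) :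
    Integrable (fun y => g y * E y) := by
  have hEc : Continuous E := continuous_iff_continuousAt.2 fun y => (hd y).continuousAt
  have i1 := (aux_E hE hrc hd hr).2.1
  have i2 := (aux_E (E := fun y => E (-y)) (r := fun y => -r (-y)) (fun y => hE _) (by fun_prop)
    (aux_refl hd) hr').2.1
  refine aux_full (R := R) (by fun_prop) ?_ ?_
  · refine Integrable.mono' (i1.const_mul A) (Continuous.aestronglyMeasurable (by fun_prop)) ?_
    refine (ae_restrict_iff' measurableSet_Ioi).2 (Eventually.of_forall fun y hy => ?_)
    have h := hg y
    rw [abs_of_pos (lt_of_le_of_lt hR hy)] at h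
    rw [norm_mul, Real.norm_eq_abs, Real.norm_eq_abs, abs_of_pos (hE _), ← mul_assoc]
    exact mul_le_mul_of_nonneg_right h (hE _).le
  · refine Integrable.mono' (i2.const_mul A) (Continuous.aestronglyMeasurable (by fun_prop)) ?_
    refine (ae_restrict_iff' measurableSet_Ioi).2 (Eventually.of_forall fun y hy => ?_)
    have h := hg (-y)
    rw [abs_neg, abs_of_pos (lt_of_le_of_lt hR hy)] at h
    rw [norm_mul, Real.norm_eq_abs, Real.norm_eq_abs, abs_of_pos (hE _), ← mul_assoc]
    exact mul_le_mul_of_nonneg_right h (hE _).le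

open Filter Topology Set in
lemma aux_main {E₁ E₂ r₁ r₂ g W : ℝ → ℝ} {R A : ℝ} (hE₁ : ∀ y, 0 < E₁ y) (hE₂ : ∀ y, 0 < E₂ y)
    (hrc₁ : Continuous r₁) (hrc₂ : Continuous r₂)
    (hd₁ : ∀ y, HasDerivAt E₁ (r₁ y * E₁ y) y) (hd₂ : ∀ y, HasDerivAt E₂ (r₂ y * E₂ y) y)
    (hr₁ : ∀ y, R ≤ y → r₁ y ≤ -3) (hr₂ : ∀ y, R ≤ y → r₂ y ≤ -3)
    (hr₁' : ∀ y, R ≤ y → -r₁ (-y) ≤ -3) (hr₂' : ∀ y, R ≤ y → -r₂ (-y) ≤ -3) (hR : 0 ≤ R)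
    (hgc : Continuous g) (hg : ∀ y, |g y| ≤ A * Real.exp |y|)
    (hW : ∀ y, HasDerivAt W (g y * E₂ y) y) (hWl : Tendsto W atTop (𝓝 0))
    (hWl' : Tendsto W atBot (𝓝 0)) :
    Integrable (fun y => (g y + (r₁ y - r₂ y) * (W y / E₂ y)) * E₁ y) ∧
    ∫ y, (g y + (r₁ y - r₂ y) * (W y / E₂ y)) * E₁ y = 0 := by
  have hEc₁ : Continuous E₁ := continuous_iff_continuousAt.2 fun y => (hd₁ y).continuousAt
  have hEc₂ : Continuous E₂ := continuous_iff_continuousAt.2 fun y => (hd₂ y).continuousAt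
  have hWc : Continuous W := continuous_iff_continuousAt.2 fun y => (hW y).continuousAt
  have hEn₂ : ∀ y, E₂ y ≠ 0 := fun y => (hE₂ y).ne'
  obtain ⟨l, p, q⟩ := aux_half (A := A) hE₁ hE₂ hrc₁ hrc₂ hd₁ hd₂ hr₁ hr₂
    (fun y hy => by simpa [abs_of_nonneg (hR.trans hy)] using hg y) hW hWl
  obtain ⟨l', p', q'⟩ := aux_half (A := A) (E₁ := fun y => E₁ (-y)) (E₂ := fun y => E₂ (-y))
    (r₁ := fun y => -r₁ (-y)) (r₂ := fun y => -r₂ (-y)) (g := fun y => g (-y))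
    (W := fun y => -W (-y)) (fun y => hE₁ _) (fun y => hE₂ _) (by fun_prop) (by fun_prop)
    (aux_refl hd₁) (aux_refl hd₂) hr₁' hr₂'
    (fun y hy => by simpa [abs_of_nonneg (hR.trans hy)] using hg (-y))
    (fun y => by
      have h := ((hW (-y)).comp y (hasDerivAt_neg y)).neg
      refine h.congr_deriv ?_
      ring)
    (by simpa using (hWl'.comp tendsto_neg_atTop_atBot).neg)
  have P : Integrable (fun y => W y / E₂ y * (r₁ y * E₁ y)) := by
    refine aux_full (R := R) (by fun_prop (disch := assumption)) p ?_
    refine p'.congr_fun (fun y _ => ?_) measurableSet_Ioi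
    ring
  have Q : Integrable (fun y => W y / E₂ y * (r₂ y * E₁ y)) := by
    refine aux_full (R := R) (by fun_prop (disch := assumption)) q ?_
    refine q'.congr_fun (fun y _ => ?_) measurableSet_Ioi
    ring
  have G := aux_gE hE₁ hrc₁ hd₁ hr₁ hr₁' hR hgc hg
  have I : Integrable (fun y => (g y + (r₁ y - r₂ y) * (W y / E₂ y)) * E₁ y) := by
    convert (G.add P).sub Q using 1
    funext y
    simp only [Pi.add_apply, Pi.sub_apply]
    ring
  refine ⟨I, ?_⟩
  have L' : Tendsto (fun y => W y / E₂ y * E₁ y) atBot (𝓝 0) := by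
    have h := (l'.comp tendsto_neg_atBot_atTop).neg
    rw [neg_zero] at h
    refine h.congr fun y => ?_
    simp only [Function.comp_apply, neg_neg]
    ring
  have h := integral_of_hasDerivAt_of_tendsto (f := fun y => W y / E₂ y * E₁ y)
    (f' := fun y => (g y + (r₁ y - r₂ y) * (W y / E₂ y)) * E₁ y) (fun y => ?_) I L' l
  · simpa using h
  · have h := ((hW y).div (hd₂ y) (hEn₂ y)).mul (hd₁ y)
    refine h.congr_deriv ?_
    have := hEn₂ y
    try simp only [Pi.div_apply]
    field_simp
    ring

lemma aux_drift {a f : ℝ → ℝ} {lm lp β C : ℝ} (hlm : 0 < lm)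
    (hbnd : ∀ y, lm ≤ a y ∧ a y ≤ lp) (hβ : 0 < β) (hC : 0 < C)
    (hdis : ∀ y, f y * y ≤ -β * y ^ 2 + C) (y : ℝ) (hy : 1 + (3 * lp + C) / β ≤ y) :
    f y / a y ≤ -3 ∧ -(f (-y) / a (-y)) ≤ -3 := by
  have hlp : 0 < lp := by linarith [(hbnd 0).1, (hbnd 0).2]
  have hq : 0 < (3 * lp + C) / β := by positivity
  have hy1 : 1 ≤ y := by linarith
  have hb : 3 * lp + C ≤ β * y := by
    have h : (3 * lp + C) / β ≤ y := by linarith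
    rw [div_le_iff₀ hβ] at h
    linarith
  have key : ∀ t : ℝ, t * y ≤ -β * y ^ 2 + C → t ≤ -3 * lp := by
    intro t ht
    by_contra hcon
    push Not at hcon
    have h1 : -3 * lp * y < t * y := mul_lt_mul_of_pos_right hcon (by linarith)
    have h2 : (3 * lp + C) * y ≤ β * y * y := mul_le_mul_of_nonneg_right hb (by linarith)
    nlinarith
  constructor
  · have h := key _ (hdis y)
    have hp : 0 < a y := by linarith [(hbnd y).1]
    rw [div_le_iff₀ hp]
    linarith [(hbnd y).2]
  · have h := key (-f (-y)) (by have := hdis (-y); nlinarith)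
    have hp : 0 < a (-y) := by linarith [(hbnd (-y)).1]
    rw [← neg_div, div_le_iff₀ hp]
    linarith [(hbnd (-y)).2]

lemma aux_growth {h : ℝ → ℝ} {K : ℝ} {m : ℕ} (hh : ∀ y, |h y| ≤ K * (1 + |y| ^ m)) (c : ℝ)
    {a : ℝ → ℝ} {lm : ℝ} (hlm : 0 < lm) (ha : ∀ y, lm ≤ a y) (y : ℝ) :
    |(h y - c) / a y| ≤ (K * (1 + m.factorial) + |c|) / lm * Real.exp |y| := by
  have hK : 0 ≤ K := by
    have h1 := (abs_nonneg _).trans (hh 0)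
    exact nonneg_of_mul_nonneg_left h1 (by positivity)
  have he : 1 ≤ Real.exp |y| := Real.one_le_exp (abs_nonneg y)
  have hp : |y| ^ m ≤ m.factorial * Real.exp |y| := by
    have h2 := Real.pow_div_factorial_le_exp |y| (abs_nonneg y) m
    rw [div_le_iff₀ (by positivity)] at h2
    linarith
  have h3 : |h y - c| ≤ (K * (1 + m.factorial) + |c|) * Real.exp |y| := by
    have h4 : |h y - c| ≤ |h y| + |c| := abs_sub _ _
    have h5 : K * (1 + |y| ^ m) ≤ K * (Real.exp |y| + m.factorial * Real.exp |y|) :=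
      mul_le_mul_of_nonneg_left (by linarith) hK
    have h6 : |c| ≤ |c| * Real.exp |y| := le_mul_of_one_le_right (abs_nonneg c) he
    linarith [hh y]
  have hay : 0 < a y := lt_of_lt_of_le hlm (ha y)
  rw [abs_div, abs_of_pos hay, div_mul_eq_mul_div]
  exact div_le_div₀ ((abs_nonneg _).trans h3) h3 hlm (ha y)

open Filter Topology in
/-- the one-dimensional difference transfer formula between averages
against two explicit invariant densities, via the explicit Poisson solution for the
second pair of coefficients. -/
theorem one_dim_difference_transfer_formula
    (a₁ a₂ f₁ f₂ h₁ h₂ : ℝ → ℝ) (lm lp β C K : ℝ) (m : ℕ)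
    (ha₁c : Continuous a₁) (ha₂c : Continuous a₂)
    (hf₁c : Continuous f₁) (hf₂c : Continuous f₂)
    (hh₁c : Continuous h₁) (hh₂c : Continuous h₂)
    (hlm : 0 < lm)
    (hbnd₁ : ∀ y, lm ≤ a₁ y ∧ a₁ y ≤ lp) (hbnd₂ : ∀ y, lm ≤ a₂ y ∧ a₂ y ≤ lp)
    (hβ : 0 < β) (hC : 0 < C)
    (hdis₁ : ∀ y, f₁ y * y ≤ -β * y ^ 2 + C) (hdis₂ : ∀ y, f₂ y * y ≤ -β * y ^ 2 + C)
    (hh₁ : ∀ y, |h₁ y| ≤ K * (1 + |y| ^ m)) (hh₂ : ∀ y, |h₂ y| ≤ K * (1 + |y| ^ m)) :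
    (∫ y, h₁ y * piDen a₁ f₁ y) - (∫ y, h₂ y * piDen a₂ f₂ y) =
      ∫ y, (h₁ y - h₂ y -
        ((f₁ y - f₂ y) * (Fint a₂ f₂ h₂ y / (a₂ y * piDen a₂ f₂ y)) +
          (a₁ y - a₂ y) * ((h₂ y - hbar a₂ f₂ h₂) / a₂ y -
            f₂ y * Fint a₂ f₂ h₂ y / ((a₂ y) ^ 2 * piDen a₂ f₂ y)))) * piDen a₁ f₁ y := by
  have hp₁ : ∀ y, 0 < a₁ y := fun y => lt_of_lt_of_le hlm (hbnd₁ y).1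
  have hp₂ : ∀ y, 0 < a₂ y := fun y => lt_of_lt_of_le hlm (hbnd₂ y).1
  have hn₁ : ∀ y, a₁ y ≠ 0 := fun y => (hp₁ y).ne'
  have hn₂ : ∀ y, a₂ y ≠ 0 := fun y => (hp₂ y).ne'
  have hlp : 0 < lp := by linarith [(hbnd₁ 0).1, (hbnd₁ 0).2]
  obtain ⟨r₁, hr₁⟩ : ∃ r : ℝ → ℝ, r = fun y => f₁ y / a₁ y := ⟨_, rfl⟩
  obtain ⟨r₂, hr₂⟩ : ∃ r : ℝ → ℝ, r = fun y => f₂ y / a₂ y := ⟨_, rfl⟩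
  have hrc₁ : Continuous r₁ := by rw [hr₁]; fun_prop (disch := assumption)
  have hrc₂ : Continuous r₂ := by rw [hr₂]; fun_prop (disch := assumption)
  obtain ⟨E₁, hE₁⟩ : ∃ E : ℝ → ℝ, E = fun y => Real.exp (∫ s in (0:ℝ)..y, r₁ s) := ⟨_, rfl⟩
  obtain ⟨E₂, hE₂⟩ : ∃ E : ℝ → ℝ, E = fun y => Real.exp (∫ s in (0:ℝ)..y, r₂ s) := ⟨_, rfl⟩
  have hd₁ : ∀ y, HasDerivAt E₁ (r₁ y * E₁ y) y := by
    intro y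
    rw [hE₁, mul_comm]
    exact (hrc₁.integral_hasStrictDerivAt 0 y).hasDerivAt.exp
  have hd₂ : ∀ y, HasDerivAt E₂ (r₂ y * E₂ y) y := by
    intro y
    rw [hE₂, mul_comm]
    exact (hrc₂.integral_hasStrictDerivAt 0 y).hasDerivAt.exp
  have hEp₁ : ∀ y, 0 < E₁ y := fun y => by rw [hE₁]; exact Real.exp_pos _
  have hEp₂ : ∀ y, 0 < E₂ y := fun y => by rw [hE₂]; exact Real.exp_pos _
  have hEc₁ : Continuous E₁ := continuous_iff_continuousAt.2 fun y => (hd₁ y).continuousAt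
  have hEc₂ : Continuous E₂ := continuous_iff_continuousAt.2 fun y => (hd₂ y).continuousAt
  have hrho₁ : ∀ y, rho1 a₁ f₁ y = (a₁ y)⁻¹ * E₁ y := fun y => by rw [hE₁, hr₁]; rfl
  have hrho₂ : ∀ y, rho1 a₂ f₂ y = (a₂ y)⁻¹ * E₂ y := fun y => by rw [hE₂, hr₂]; rfl
  obtain ⟨R, hRdef⟩ : ∃ R : ℝ, R = 1 + (3 * lp + C) / β := ⟨_, rfl⟩
  have hR : 0 ≤ R := by rw [hRdef]; positivity
  have hdr₁ : ∀ y, R ≤ y → r₁ y ≤ -3 ∧ -r₁ (-y) ≤ -3 := fun y hy => by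
    rw [hr₁]; exact aux_drift hlm hbnd₁ hβ hC hdis₁ y (hRdef ▸ hy)
  have hdr₂ : ∀ y, R ≤ y → r₂ y ≤ -3 ∧ -r₂ (-y) ≤ -3 := fun y hy => by
    rw [hr₂]; exact aux_drift hlm hbnd₂ hβ hC hdis₂ y (hRdef ▸ hy)
  -- integrability of polynomially growing data
  have int₁ : ∀ h : ℝ → ℝ, Continuous h → ∀ (K c : ℝ) (m : ℕ),
      (∀ y, |h y| ≤ K * (1 + |y| ^ m)) →
      Integrable (fun y => (h y - c) * rho1 a₁ f₁ y) := by
    intro h hc K c m hb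
    have := aux_gE hEp₁ hrc₁ hd₁ (fun y hy => (hdr₁ y hy).1) (fun y hy => (hdr₁ y hy).2) hR
      (g := fun y => (h y - c) / a₁ y) (by fun_prop (disch := assumption))
      (aux_growth hb c hlm fun y => (hbnd₁ y).1)
    refine this.congr (Eventually.of_forall fun y => ?_)
    simp only [hrho₁]
    ring
  have int₂ : ∀ h : ℝ → ℝ, Continuous h → ∀ (K c : ℝ) (m : ℕ),
      (∀ y, |h y| ≤ K * (1 + |y| ^ m)) →
      Integrable (fun y => (h y - c) * rho1 a₂ f₂ y) := by
    intro h hc K c m hb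
    have := aux_gE hEp₂ hrc₂ hd₂ (fun y hy => (hdr₂ y hy).1) (fun y hy => (hdr₂ y hy).2) hR
      (g := fun y => (h y - c) / a₂ y) (by fun_prop (disch := assumption))
      (aux_growth hb c hlm fun y => (hbnd₂ y).1)
    refine this.congr (Eventually.of_forall fun y => ?_)
    simp only [hrho₂]
    ring
  have irho₁ : Integrable (rho1 a₁ f₁) := by
    simpa using int₁ (fun _ => 1) continuous_const 1 0 0 (fun y => by norm_num)
  have irho₂ : Integrable (rho1 a₂ f₂) := by
    simpa using int₂ (fun _ => 1) continuous_const 1 0 0 (fun y => by norm_num)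
  have rpos₁ : ∀ y, 0 < rho1 a₁ f₁ y := fun y => by
    rw [hrho₁]; exact mul_pos (inv_pos.2 (hp₁ y)) (hEp₁ y)
  have rpos₂ : ∀ y, 0 < rho1 a₂ f₂ y := fun y => by
    rw [hrho₂]; exact mul_pos (inv_pos.2 (hp₂ y)) (hEp₂ y)
  have Zp₁ : 0 < Z1 a₁ f₁ := by
    unfold Z1
    rw [integral_pos_iff_support_of_nonneg (fun y => (rpos₁ y).le) irho₁,
      Function.support_eq_univ (fun y => (rpos₁ y).ne')]
    simp
  have Zp₂ : 0 < Z1 a₂ f₂ := by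
    unfold Z1
    rw [integral_pos_iff_support_of_nonneg (fun y => (rpos₂ y).le) irho₂,
      Function.support_eq_univ (fun y => (rpos₂ y).ne')]
    simp
  have ipi₁ : ∫ y, piDen a₁ f₁ y = 1 := by
    unfold piDen
    rw [integral_div]
    exact div_self Zp₁.ne'
  have ipi₂ : ∫ y, piDen a₂ f₂ y = 1 := by
    unfold piDen
    rw [integral_div]
    exact div_self Zp₂.ne'
  obtain ⟨b, hb⟩ : ∃ b, b = hbar a₂ f₂ h₂ := ⟨_, rfl⟩
  have hbint : ∫ y, h₂ y * piDen a₂ f₂ y = b := hb.symm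
  -- the function `W`
  have iW := int₂ h₂ hh₂c K b m hh₂
  have cW : Continuous (fun y => (h₂ y - b) * rho1 a₂ f₂ y) := by
    simp only [hrho₂]
    fun_prop (disch := assumption)
  obtain ⟨W, hW⟩ : ∃ W : ℝ → ℝ, W = fun y => ∫ s in Set.Iic y, (h₂ s - b) * rho1 a₂ f₂ s :=
    ⟨_, rfl⟩
  have hF : ∀ y, Fint a₂ f₂ h₂ y = W y / Z1 a₂ f₂ := by
    intro y
    rw [hW]
    simp only [Fint, ← hb, piDen, ← integral_div]
    simp only [mul_div_assoc]
  have tot : ∫ y, (h₂ y - b) * rho1 a₂ f₂ y = 0 := by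
    have i0 : Integrable (fun y => h₂ y * piDen a₂ f₂ y) := by
      have := (int₂ h₂ hh₂c K 0 m hh₂).div_const (Z1 a₂ f₂)
      refine this.congr (Eventually.of_forall fun y => ?_)
      simp only [piDen]
      ring
    have e : ∀ y, (h₂ y - b) * rho1 a₂ f₂ y =
        Z1 a₂ f₂ * (h₂ y * piDen a₂ f₂ y - b * piDen a₂ f₂ y) := by
      intro y
      have := Zp₂.ne'
      simp only [piDen]
      field_simp
    simp only [e]
    have i3 : Integrable (fun y => b * piDen a₂ f₂ y) := (irho₂.div_const _).const_mul b
    rw [integral_const_mul, integral_sub i0 i3,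
      integral_const_mul, ipi₂, hbint]
    ring
  have hWd : ∀ y, HasDerivAt W ((h₂ y - b) / a₂ y * E₂ y) y := by
    intro y
    have e : W = fun z => W 0 + ∫ s in (0:ℝ)..z, (h₂ s - b) * rho1 a₂ f₂ s := by
      funext z
      rw [← intervalIntegral.integral_Iic_sub_Iic iW.integrableOn iW.integrableOn, hW]
      ring
    rw [e]
    have h := (cW.integral_hasStrictDerivAt 0 y).hasDerivAt.const_add (W 0)
    refine h.congr_deriv ?_
    rw [hrho₂]
    ring
  have hWt : Tendsto W atTop (𝓝 0) := by
    have h := intervalIntegral_tendsto_integral_Ioi 0 iW.integrableOn tendsto_id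
    have h2 := h.const_add (W 0)
    have e : W 0 + ∫ s in Set.Ioi (0:ℝ), (h₂ s - b) * rho1 a₂ f₂ s = 0 := by
      rw [hW]
      dsimp only
      rw [intervalIntegral.integral_Iic_add_Ioi iW.integrableOn iW.integrableOn, tot]
    rw [e] at h2
    refine h2.congr fun z => ?_
    rw [id, ← intervalIntegral.integral_Iic_sub_Iic iW.integrableOn iW.integrableOn, hW]
    ring
  have hWb : Tendsto W atBot (𝓝 0) := by
    have h := intervalIntegral_tendsto_integral_Iic 0 iW.integrableOn tendsto_id
    have h2 := h.const_sub (W 0)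
    have e : W 0 - ∫ s in Set.Iic (0:ℝ), (h₂ s - b) * rho1 a₂ f₂ s = 0 := by
      rw [hW]
      exact sub_self _
    rw [e] at h2
    refine h2.congr fun z => ?_
    rw [id, ← intervalIntegral.integral_Iic_sub_Iic iW.integrableOn iW.integrableOn, hW]
    ring
  obtain ⟨hI, hI0⟩ := aux_main hEp₁ hEp₂ hrc₁ hrc₂ hd₁ hd₂ (fun y hy => (hdr₁ y hy).1)
    (fun y hy => (hdr₂ y hy).1) (fun y hy => (hdr₁ y hy).2) (fun y hy => (hdr₂ y hy).2) hR
    (g := fun y => (h₂ y - b) / a₂ y) (by fun_prop (disch := assumption))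
    (aux_growth hh₂ b hlm fun y => (hbnd₂ y).1) hWd hWt hWb
  have i1 : Integrable (fun y => h₁ y * piDen a₁ f₁ y) := by
    have := (int₁ h₁ hh₁c K 0 m hh₁).div_const (Z1 a₁ f₁)
    refine this.congr (Eventually.of_forall fun y => ?_)
    simp only [piDen]
    ring
  have i2 : Integrable (fun y => b * piDen a₁ f₁ y) := (irho₁.div_const _).const_mul b
  have point : ∀ y, (h₁ y - h₂ y -
        ((f₁ y - f₂ y) * (Fint a₂ f₂ h₂ y / (a₂ y * piDen a₂ f₂ y)) +
          (a₁ y - a₂ y) * ((h₂ y - b) / a₂ y -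
            f₂ y * Fint a₂ f₂ h₂ y / ((a₂ y) ^ 2 * piDen a₂ f₂ y)))) * piDen a₁ f₁ y =
      h₁ y * piDen a₁ f₁ y - b * piDen a₁ f₁ y -
        ((h₂ y - b) / a₂ y + (r₁ y - r₂ y) * (W y / E₂ y)) * E₁ y / Z1 a₁ f₁ := by
    intro y
    have q1 := Zp₁.ne'
    have q2 := Zp₂.ne'
    have q3 := hn₁ y
    have q4 := hn₂ y
    have q5 := (hEp₂ y).ne'
    rw [hF, hr₁, hr₂]
    simp only [piDen, hrho₁, hrho₂]
    field_simp
    ring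
  rw [hbint, ← hb]
  simp only [point]
  have i12 : Integrable (fun y => h₁ y * piDen a₁ f₁ y - b * piDen a₁ f₁ y) := i1.sub i2
  rw [integral_sub i12 (hI.div_const _), integral_sub i1 i2, integral_div, hI0,
    integral_const_mul, ipi₁]
  ring

end
end

section
/- Let f, a, h : ℝ×ℝ → ℝ (arguments (x,y)) be jointly continuous, continuously differentiable in x with jointly continuous partial derivatives ∂_x f, ∂_x a, ∂_x h, and suppose there are constants 0 < λ₋ ≤ λ₊, β, C, K > 0 and m ∈ ℕ such that for every x: λ₋ ≤ a(x,y) ≤ λ₊ and f(x,y)·y ≤ −β y² + C for all y; |f(x,y)| ≤ K(1+|y|); and |h(x,y)| + |∂_x h(x,y)| + |∂_x f(x,y)| + |∂_x a(x,y)| ≤ K(1+|y|^m) for all (x,y). For each x define ρ(y;x) = a(x,y)⁻¹ exp(∫₀^y f(x,s)/a(x,s) ds), Z(x) = ∫_ℝ ρ(y;x) dy, π(y;x) = ρ(y;x)/Z(x), h̄(x) = ∫_ℝ h(x,y)π(y;x) dy, F(y;x) = ∫_{−∞}^y (h(x,s) − h̄(x))π(s;x) ds, v_y(y;x) = F(y;x)/(a(x,y)π(y;x)),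 and v_{yy}(y;x) = (h(x,y) − h̄(x))/a(x,y) − f(x,y)F(y;x)/(a(x,y)²π(y;x)). Then h̄ is continuously differentiable on ℝ and for every x: h̄'(x) = ∫_ℝ [ ∂_x h(x,y) − ∂_x f(x,y)·v_y(y;x) − ∂_x a(x,y)·v_{yy}(y;x) ] π(y;x) dy. -/
open MeasureTheory

noncomputable section

/-- The averaged coefficient `h̄(x) = ∫ h(x,y) π(y;x) dy`. -/
def hbarX (a f h : ℝ → ℝ → ℝ) (x : ℝ) : ℝ :=
  hbar (fun y => a x y) (fun y => f x y) (fun y => h x y)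

/-- The explicit first `y`-derivative `v_y(y;x) = F(y;x)/(a(x,y)π(y;x))` of the
one-dimensional Poisson solution. -/
def vyX (a f h : ℝ → ℝ → ℝ) (x y : ℝ) : ℝ :=
  Fint (fun z => a x z) (fun z => f x z) (fun z => h x z) y /
    (a x y * piDen (fun z => a x z) (fun z => f x z) y)

/-- The explicit second `y`-derivative
`v_{yy}(y;x) = (h(x,y) − h̄(x))/a(x,y) − f(x,y)F(y;x)/(a(x,y)²π(y;x))`. -/
def vyyX (a f h : ℝ → ℝ → ℝ) (x y : ℝ) : ℝ :=
  (h x y - hbarX a f h x) / a x y -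
    f x y * Fint (fun z => a x z) (fun z => f x z) (fun z => h x z) y /
      ((a x y) ^ 2 * piDen (fun z => a x z) (fun z => f x z) y)

lemma aux_weight_int (c D : ℝ) (hc : 0 < c) (n : ℕ) :
    Integrable fun y : ℝ => (1 + |y|) ^ n * Real.exp (-c * y ^ 2 + D * |y|) := by
  have h1 := (integrable_exp_neg_mul_sq (b := c / 2) (by positivity)).const_mul
    (n.factorial * Real.exp (1 + (D + 1) ^ 2 / (2 * c)))
  refine h1.mono' (by fun_prop) (Filter.Eventually.of_forall fun y => ?_)
  rw [Real.norm_of_nonneg (by positivity)]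
  have h2 := Real.pow_div_factorial_le_exp (1 + |y|) (by positivity) n
  rw [div_le_iff₀ (by positivity)] at h2
  have h3 : (D + 1) * |y| ≤ c / 2 * y ^ 2 + (D + 1) ^ 2 / (2 * c) := by
    have : c / 2 * y ^ 2 + (D + 1) ^ 2 / (2 * c) - (D + 1) * |y|
        = (c * |y| - (D + 1)) ^ 2 / (2 * c) := by
      rw [← sq_abs y]; field_simp; ring
    have : 0 ≤ (c * |y| - (D + 1)) ^ 2 / (2 * c) := by positivity
    linarith
  calc _ ≤ (Real.exp (1 + |y|) * n.factorial) * Real.exp (-c * y ^ 2 + D * |y|) := by gcongr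
    _ = n.factorial * Real.exp ((1 + |y|) + (-c * y ^ 2 + D * |y|)) := by
      rw [Real.exp_add (1 + |y|)]; ring
    _ ≤ n.factorial * Real.exp ((1 + (D + 1) ^ 2 / (2 * c)) + (-(c / 2) * y ^ 2)) := by
      gcongr ?_ * Real.exp ?_
      linarith
    _ = _ := by rw [Real.exp_add]; ring

lemma aux_point (β C K lm lp A φ t : ℝ) (hlm : 0 < lm) (hβ : 0 < β) (hC : 0 < C) (hK : 0 < K)
    (h1 : lm ≤ A) (h2 : A ≤ lp) (ht : 0 ≤ t) (hd : φ * t ≤ -β * t ^ 2 + C)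
    (hl : |φ| ≤ K * (1 + t)) : φ / A ≤ -(β / lp) * t + (C + β + 2 * K) / lm := by
  have hA : 0 < A := by linarith
  have hlp : 0 < lp := by linarith
  have h3 : φ ≤ -β * t + (C + β + 2 * K) := by
    rcases le_total 1 t with h | h
    · have : φ * t ≤ (-β * t + C) * t := by nlinarith
      have := le_of_mul_le_mul_right this (by linarith)
      linarith
    · have := le_abs_self φ
      nlinarith
  rw [div_le_iff₀ hA]
  have h4 : β / lp * t * A ≤ β * t := by
    have : β / lp * t * A ≤ β / lp * t * lp := by gcongr
    have e : β / lp * t * lp = β * t := by field_simp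
    linarith
  have h5 : (C + β + 2 * K) ≤ (C + β + 2 * K) / lm * A := by
    have : (C + β + 2 * K) / lm * lm ≤ (C + β + 2 * K) / lm * A := by gcongr
    have e : (C + β + 2 * K) / lm * lm = C + β + 2 * K := by field_simp
    linarith
  nlinarith

lemma aux_Abound (c D : ℝ) (φ : ℝ → ℝ) (hφ : Continuous φ)
    (hp : ∀ s, 0 ≤ s → φ s ≤ -c * s + D) (hn : ∀ s, s ≤ 0 → -φ s ≤ c * s + D) (y : ℝ) :
    ∫ s in (0:ℝ)..y, φ s ≤ -(c / 2) * y ^ 2 + D * |y| := by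
  rcases le_total 0 y with h | h
  · have := intervalIntegral.integral_mono_on (μ := volume) h (hφ.intervalIntegrable 0 y)
      ((by fun_prop : Continuous fun s : ℝ => -c * s + D).intervalIntegrable 0 y)
      (fun s hs => hp s hs.1)
    rw [intervalIntegral.integral_add (by apply Continuous.intervalIntegrable; fun_prop) (by simp),
      intervalIntegral.integral_const_mul, integral_id, intervalIntegral.integral_const] at this
    rw [abs_of_nonneg h]
    simp only [smul_eq_mul] at this
    linarith
  · rw [intervalIntegral.integral_symm, ← intervalIntegral.integral_neg]
    have := intervalIntegral.integral_mono_on (μ := volume) h (hφ.neg.intervalIntegrable y 0)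
      ((by fun_prop : Continuous fun s : ℝ => c * s + D).intervalIntegrable y 0)
      (fun s hs => hn s hs.2)
    rw [intervalIntegral.integral_add (by apply Continuous.intervalIntegrable; fun_prop) (by simp),
      intervalIntegral.integral_const_mul, integral_id, intervalIntegral.integral_const] at this
    rw [abs_of_nonpos h]
    simp only [smul_eq_mul, Pi.neg_apply] at this
    linarith

/-- derivative of the left primitive -/
lemma aux_F_deriv (q : ℝ → ℝ) (hq : Continuous q) (hi : Integrable q) (y : ℝ) :
    HasDerivAt (fun y => ∫ s in Set.Iic y, q s) (q y) y := by
  have e : (fun y => ∫ s in Set.Iic y, q s)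
      = fun y => (∫ s in Set.Iic (0:ℝ), q s) + ∫ s in (0:ℝ)..y, q s := by
    funext z
    rw [← intervalIntegral.integral_Iic_sub_Iic hi.integrableOn hi.integrableOn]; ring
  rw [e]
  exact (intervalIntegral.integral_hasDerivAt_right (hq.intervalIntegrable _ _)
    (hq.stronglyMeasurableAtFilter _ _) hq.continuousAt).const_add _

/-- decay of the left primitive of a mean-zero function -/
lemma aux_F_decay (q : ℝ → ℝ) (hq : Continuous q) (hi : Integrable q)
    (h0 : ∫ y, q y = 0) (k : ℕ) (hk : Integrable fun y => (1 + |y|) ^ k * q y) (y : ℝ) :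
    (1 + |y|) ^ k * |∫ s in Set.Iic y, q s| ≤ ∫ s, (1 + |s|) ^ k * |q s| := by
  have hk' : Integrable fun y => (1 + |y|) ^ k * |q y| := by
    refine hk.norm.congr (Filter.Eventually.of_forall fun s => ?_)
    simp only [norm_mul, Real.norm_eq_abs]
    rw [abs_of_nonneg (by positivity : (0:ℝ) ≤ (1 + |s|) ^ k)]
  have key : ∀ S : Set ℝ, MeasurableSet S → (∀ s ∈ S, |y| ≤ |s|) →
      (1 + |y|) ^ k * |∫ s in S, q s| ≤ ∫ s, (1 + |s|) ^ k * |q s| := by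
    intro S hS hs
    calc _ ≤ (1 + |y|) ^ k * ∫ s in S, |q s| := by
          have := norm_integral_le_integral_norm (μ := volume.restrict S) q
          simp only [Real.norm_eq_abs] at this
          gcongr
      _ = ∫ s in S, (1 + |y|) ^ k * |q s| := by rw [integral_const_mul]
      _ ≤ ∫ s in S, (1 + |s|) ^ k * |q s| := by
          refine setIntegral_mono_on (hi.abs.integrableOn.const_mul _) hk'.integrableOn hS ?_
          intro s hss
          have := hs s hss
          gcongr
      _ ≤ _ := setIntegral_le_integral hk' (Filter.Eventually.of_forall fun s => by positivity)
  rcases le_total y 0 with h | h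
  · refine key _ measurableSet_Iic fun s hs => ?_
    have : s ≤ y := hs
    rw [abs_of_nonpos h, abs_of_nonpos (by linarith)]; linarith
  · have := intervalIntegral.integral_Iic_add_Ioi (b := y) hi.integrableOn hi.integrableOn
    rw [h0] at this
    rw [eq_neg_of_add_eq_zero_left this, abs_neg]
    refine key _ measurableSet_Ioi fun s hs => ?_
    have : y < s := hs
    rw [abs_of_nonneg h, abs_of_nonneg (by linarith)]; linarith

lemma aux_F_int (q P : ℝ → ℝ) (hq : Continuous q) (hP : Continuous P) (hi : Integrable q)
    (h0 : ∫ y, q y = 0) (hk : ∀ k : ℕ, Integrable fun y => (1 + |y|) ^ k * q y)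
    (M : ℝ) (n : ℕ) (hPb : ∀ y, |P y| ≤ M * (1 + |y|) ^ n) :
    Integrable fun y => (∫ s in Set.Iic y, q s) * P y := by
  have hF : Continuous fun y => ∫ s in Set.Iic y, q s :=
    continuous_iff_continuousAt.2 fun y => (aux_F_deriv q hq hi y).continuousAt
  have hM : 0 ≤ M := by
    have := (abs_nonneg _).trans (hPb 0)
    simpa using this
  set I := ∫ s, (1 + |s|) ^ (n + 2) * |q s| with hI
  refine (integrable_inv_one_add_sq.const_mul (M * I)).mono'
    (hF.mul hP).aestronglyMeasurable (Filter.Eventually.of_forall fun y => ?_)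
  have h1 := aux_F_decay q hq hi h0 (n + 2) (hk _) y
  rw [← hI] at h1
  rw [Real.norm_eq_abs, abs_mul, ← div_eq_mul_inv, le_div_iff₀ (by positivity)]
  set F := |∫ s in Set.Iic y, q s| with hFd
  have hF0 : 0 ≤ F := abs_nonneg _
  have h2 : 1 + y ^ 2 ≤ (1 + |y|) ^ 2 := by
    rw [← sq_abs y]; nlinarith [abs_nonneg y]
  calc F * |P y| * (1 + y ^ 2) ≤ F * (M * (1 + |y|) ^ n) * (1 + |y|) ^ 2 := by
        gcongr; exact hPb y
    _ = M * ((1 + |y|) ^ (n + 2) * F) := by ring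
    _ ≤ M * I := by gcongr

/-- differentiation of weighted integrals in the parameter -/
lemma aux_param (H H' ρ g : ℝ → ℝ → ℝ) (B : ℝ → ℝ) (M L : ℝ) (n k : ℕ)
    (hH : Continuous fun p : ℝ × ℝ => H p.1 p.2)
    (hH' : Continuous fun p : ℝ × ℝ => H' p.1 p.2)
    (hρ : Continuous fun p : ℝ × ℝ => ρ p.1 p.2)
    (hg : Continuous fun p : ℝ × ℝ => g p.1 p.2)
    (hHd : ∀ x y, HasDerivAt (fun x => H x y) (H' x y) x)
    (hρd : ∀ x y, HasDerivAt (fun x => ρ x y) (ρ x y * g x y) x)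
    (hHb : ∀ x y, |H x y| ≤ M * (1 + |y|) ^ n)
    (hHb' : ∀ x y, |H' x y| ≤ M * (1 + |y|) ^ n)
    (hgb : ∀ x y, |g x y| ≤ L * (1 + |y|) ^ k)
    (hρ0 : ∀ x y, 0 ≤ ρ x y) (hρB : ∀ x y, ρ x y ≤ B y)
    (hB : ∀ j : ℕ, Integrable fun y => (1 + |y|) ^ j * B y) :
    Continuous (fun x => ∫ y, (H' x y * ρ x y + H x y * (ρ x y * g x y))) ∧
    ∀ x, HasDerivAt (fun x => ∫ y, H x y * ρ x y)
      (∫ y, (H' x y * ρ x y + H x y * (ρ x y * g x y))) x := by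
  have hM : 0 ≤ M := by simpa using (abs_nonneg _).trans (hHb 0 0)
  have hL : 0 ≤ L := by simpa using (abs_nonneg _).trans (hgb 0 0)
  have sl : ∀ {T : ℝ → ℝ → ℝ}, (Continuous fun p : ℝ × ℝ => T p.1 p.2) → ∀ x, Continuous (T x) :=
    fun h x => h.comp (Continuous.prodMk_right x)
  have sr : ∀ {T : ℝ → ℝ → ℝ}, (Continuous fun p : ℝ × ℝ => T p.1 p.2) →
      ∀ y, Continuous fun x => T x y := fun h y => h.comp (Continuous.prodMk_left y)
  set bound : ℝ → ℝ := fun y => M * ((1 + |y|) ^ n * B y) + (M * L) * ((1 + |y|) ^ (n + k) * B y)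
  have hbi : Integrable bound := ((hB n).const_mul M).add ((hB (n + k)).const_mul (M * L))
  have hb : ∀ x y, ‖H' x y * ρ x y + H x y * (ρ x y * g x y)‖ ≤ bound y := by
    intro x y
    refine (norm_add_le _ _).trans ?_
    simp only [norm_mul, Real.norm_eq_abs, abs_of_nonneg (hρ0 x y)]
    have hB0 : 0 ≤ B y := (hρ0 x y).trans (hρB x y)
    have h1 : |H' x y| * ρ x y ≤ (M * (1 + |y|) ^ n) * B y :=
      mul_le_mul (hHb' x y) (hρB x y) (hρ0 x y) (by positivity)
    have h2 : |H x y| * (ρ x y * |g x y|) ≤ (M * (1 + |y|) ^ n) * (B y * (L * (1 + |y|) ^ k)) :=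
      mul_le_mul (hHb x y) (mul_le_mul (hρB x y) (hgb x y) (abs_nonneg _) hB0)
        (mul_nonneg (hρ0 x y) (abs_nonneg _)) (by positivity)
    calc _ ≤ _ := add_le_add h1 h2
      _ = bound y := by simp only [bound]; ring
  have hm : ∀ x, Continuous fun y => H' x y * ρ x y + H x y * (ρ x y * g x y) := fun x =>
    ((sl hH' x).mul (sl hρ x)).add ((sl hH x).mul ((sl hρ x).mul (sl hg x)))
  refine ⟨continuous_of_dominated (fun x => (hm x).aestronglyMeasurable)
    (fun x => Filter.Eventually.of_forall (hb x)) hbi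
    (Filter.Eventually.of_forall fun y => ((sr hH' y).mul (sr hρ y)).add
      ((sr hH y).mul ((sr hρ y).mul (sr hg y)))), fun x => ?_⟩
  refine (hasDerivAt_integral_of_dominated_loc_of_deriv_le (s := Set.univ) (bound := bound)
    (F := fun x y => H x y * ρ x y)
    (F' := fun x y => H' x y * ρ x y + H x y * (ρ x y * g x y)) Filter.univ_mem
    (Filter.Eventually.of_forall fun x => ((sl hH x).mul (sl hρ x)).aestronglyMeasurable) ?_
    (hm x).aestronglyMeasurable (Filter.Eventually.of_forall fun y x _ => hb x y) hbi
    (Filter.Eventually.of_forall fun y x _ => (hHd x y).mul (hρd x y))).2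
  refine ((hB n).const_mul M).mono' ((sl hH x).mul (sl hρ x)).aestronglyMeasurable
    (Filter.Eventually.of_forall fun y => ?_)
  rw [norm_mul, Real.norm_eq_abs, Real.norm_of_nonneg (hρ0 x y), ← mul_assoc]
  exact mul_le_mul (hHb x y) (hρB x y) (hρ0 x y) (by positivity)

/-- derivative of the density in the parameter -/
lemma aux_rho_deriv (a f ax fx : ℝ → ℝ → ℝ) (lm W : ℝ) (k : ℕ) (hlm : 0 < lm)
    (hac : Continuous fun p : ℝ × ℝ => a p.1 p.2)
    (hfc : Continuous fun p : ℝ × ℝ => f p.1 p.2)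
    (haxc : Continuous fun p : ℝ × ℝ => ax p.1 p.2)
    (hfxc : Continuous fun p : ℝ × ℝ => fx p.1 p.2)
    (had : ∀ x y, HasDerivAt (fun x => a x y) (ax x y) x)
    (hfd : ∀ x y, HasDerivAt (fun x => f x y) (fx x y) x)
    (ha : ∀ x y, lm ≤ a x y)
    (hW : ∀ x y, |fx x y / a x y - f x y * ax x y / (a x y) ^ 2| ≤ W * (1 + |y|) ^ k) (x y : ℝ) :
    HasDerivAt (fun x => rho1 (a x) (f x) y)
      (rho1 (a x) (f x) y * (-(ax x y / a x y) +
        ∫ s in (0:ℝ)..y, (fx x s / a x s - f x s * ax x s / (a x s) ^ 2))) x := by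
  have ha0 : ∀ x y, a x y ≠ 0 := fun x y => (hlm.trans_le (ha x y)).ne'
  have sl : ∀ {T : ℝ → ℝ → ℝ}, (Continuous fun p : ℝ × ℝ => T p.1 p.2) → ∀ x, Continuous (T x) :=
    fun h x => h.comp (Continuous.prodMk_right x)
  have hfa : ∀ x, Continuous fun s => f x s / a x s := fun x =>
    (sl hfc x).div (sl hac x) (ha0 x)
  have hw : Continuous fun s => fx x s / a x s - f x s * ax x s / (a x s) ^ 2 :=
    ((sl hfxc x).div (sl hac x) (ha0 x)).sub
      (((sl hfc x).mul (sl haxc x)).div ((sl hac x).pow 2) fun s => pow_ne_zero 2 (ha0 x s))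
  have hA : HasDerivAt (fun x => ∫ s in (0:ℝ)..y, f x s / a x s)
      (∫ s in (0:ℝ)..y, (fx x s / a x s - f x s * ax x s / (a x s) ^ 2)) x := by
    refine (intervalIntegral.hasDerivAt_integral_of_dominated_loc_of_deriv_le (s := Set.univ)
      (bound := fun s => W * (1 + |s|) ^ k)
      (F := fun x s => f x s / a x s)
      (F' := fun x s => fx x s / a x s - f x s * ax x s / (a x s) ^ 2) Filter.univ_mem
      (Filter.Eventually.of_forall fun x => (hfa x).aestronglyMeasurable)
      ((hfa x).intervalIntegrable _ _) hw.aestronglyMeasurable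
      (Filter.Eventually.of_forall fun s _ x _ => hW x s)
      ((by fun_prop : Continuous fun s : ℝ => W * (1 + |s|) ^ k).intervalIntegrable _ _)
      (Filter.Eventually.of_forall fun s _ x _ => ?_)).2
    refine ((hfd x s).div (had x s) (ha0 x s)).congr_deriv ?_
    have := ha0 x s
    field_simp
  have h1 := ((had x y).inv (ha0 x y)).mul hA.exp
  refine h1.congr_deriv ?_
  have := ha0 x y
  simp only [rho1, Pi.inv_apply]
  generalize (∫ s in (0:ℝ)..y, (fx x s / a x s - f x s * ax x s / (a x s) ^ 2)) = I
  generalize Real.exp (∫ s in (0:ℝ)..y, f x s / a x s) = J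
  field_simp

/-- the first-order derivative transfer formula for the averaged
coefficient `h̄(x)` in dimension one. -/
theorem one_dim_derivative_transfer_formula
    (a f h : ℝ → ℝ → ℝ) (lm lp β C K : ℝ) (m : ℕ)
    (hac : Continuous fun p : ℝ × ℝ => a p.1 p.2)
    (hfc : Continuous fun p : ℝ × ℝ => f p.1 p.2)
    (hhc : Continuous fun p : ℝ × ℝ => h p.1 p.2)
    (hax : ∀ y, ContDiff ℝ 1 fun x => a x y)
    (hfx : ∀ y, ContDiff ℝ 1 fun x => f x y)
    (hhx : ∀ y, ContDiff ℝ 1 fun x => h x y)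
    (haxc : Continuous fun p : ℝ × ℝ => deriv (fun x => a x p.2) p.1)
    (hfxc : Continuous fun p : ℝ × ℝ => deriv (fun x => f x p.2) p.1)
    (hhxc : Continuous fun p : ℝ × ℝ => deriv (fun x => h x p.2) p.1)
    (hlm : 0 < lm) (hle : lm ≤ lp) (hβ : 0 < β) (hC : 0 < C) (hK : 0 < K)
    (hbnd : ∀ x y, lm ≤ a x y ∧ a x y ≤ lp)
    (hdis : ∀ x y, f x y * y ≤ -β * y ^ 2 + C)
    (hlin : ∀ x y, |f x y| ≤ K * (1 + |y|))
    (hgrow : ∀ x y, |h x y| + |deriv (fun x' => h x' y) x| +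
        |deriv (fun x' => f x' y) x| + |deriv (fun x' => a x' y) x| ≤ K * (1 + |y| ^ m)) :
    ContDiff ℝ 1 (hbarX a f h) ∧
    ∀ x, deriv (hbarX a f h) x =
      ∫ y, (deriv (fun x' => h x' y) x - deriv (fun x' => f x' y) x * vyX a f h x y -
        deriv (fun x' => a x' y) x * vyyX a f h x y) *
          piDen (fun z => a x z) (fun z => f x z) y := by
  -- partial derivatives
  set ax : ℝ → ℝ → ℝ := fun x y => deriv (fun x' => a x' y) x with hax_def
  set fx : ℝ → ℝ → ℝ := fun x y => deriv (fun x' => f x' y) x with hfx_def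
  set hx : ℝ → ℝ → ℝ := fun x y => deriv (fun x' => h x' y) x with hhx_def
  have had : ∀ x y, HasDerivAt (fun x => a x y) (ax x y) x := fun x y =>
    ((hax y).differentiable one_ne_zero x).hasDerivAt
  have hfd : ∀ x y, HasDerivAt (fun x => f x y) (fx x y) x := fun x y =>
    ((hfx y).differentiable one_ne_zero x).hasDerivAt
  have hhd : ∀ x y, HasDerivAt (fun x => h x y) (hx x y) x := fun x y =>
    ((hhx y).differentiable one_ne_zero x).hasDerivAt
  have haxc' : Continuous fun p : ℝ × ℝ => ax p.1 p.2 := haxc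
  have hfxc' : Continuous fun p : ℝ × ℝ => fx p.1 p.2 := hfxc
  have hhxc' : Continuous fun p : ℝ × ℝ => hx p.1 p.2 := hhxc
  have hlp : 0 < lp := hlm.trans_le hle
  have hapos : ∀ x y, 0 < a x y := fun x y => hlm.trans_le (hbnd x y).1
  have ha0 : ∀ x y, a x y ≠ 0 := fun x y => (hapos x y).ne'
  have sl : ∀ {T : ℝ → ℝ → ℝ}, (Continuous fun p : ℝ × ℝ => T p.1 p.2) → ∀ x, Continuous (T x) :=
    fun h x => h.comp (Continuous.prodMk_right x)
  -- growth
  have hpow : ∀ y : ℝ, K * (1 + |y| ^ m) ≤ 2 * K * (1 + |y|) ^ m := by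
    intro y
    have h1 : (1:ℝ) ≤ (1 + |y|) ^ m := one_le_pow₀ (by linarith [abs_nonneg y])
    have h2 : |y| ^ m ≤ (1 + |y|) ^ m := by gcongr; linarith
    nlinarith
  have hg4 : ∀ x y, |h x y| + |hx x y| + |fx x y| + |ax x y| ≤ 2 * K * (1 + |y|) ^ m :=
    fun x y => (hgrow x y).trans (hpow y)
  have hhb : ∀ x y, |h x y| ≤ 2 * K * (1 + |y|) ^ m := fun x y => by
    linarith [hg4 x y, abs_nonneg (hx x y), abs_nonneg (fx x y), abs_nonneg (ax x y)]
  have hhxb : ∀ x y, |hx x y| ≤ 2 * K * (1 + |y|) ^ m := fun x y => by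
    linarith [hg4 x y, abs_nonneg (h x y), abs_nonneg (fx x y), abs_nonneg (ax x y)]
  have hfxb : ∀ x y, |fx x y| ≤ 2 * K * (1 + |y|) ^ m := fun x y => by
    linarith [hg4 x y, abs_nonneg (h x y), abs_nonneg (hx x y), abs_nonneg (ax x y)]
  have haxb : ∀ x y, |ax x y| ≤ 2 * K * (1 + |y|) ^ m := fun x y => by
    linarith [hg4 x y, abs_nonneg (h x y), abs_nonneg (hx x y), abs_nonneg (fx x y)]
  clear_value ax fx hx
  -- the logarithmic derivative of the density
  set w : ℝ → ℝ → ℝ := fun x y => fx x y / a x y - f x y * ax x y / (a x y) ^ 2 with hw_def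
  set W : ℝ := 2 * K / lm + K * (2 * K) / lm ^ 2 with hW_def
  have hW0 : 0 ≤ W := by positivity
  have hwb : ∀ x y, |w x y| ≤ W * (1 + |y|) ^ (m + 1) := by
    intro x y
    have h1 : |fx x y / a x y| ≤ 2 * K * (1 + |y|) ^ (m + 1) / lm := by
      rw [abs_div, abs_of_pos (hapos x y)]
      have e : 2 * K * (1 + |y|) ^ m ≤ 2 * K * (1 + |y|) ^ (m + 1) := by
        gcongr
        · linarith [abs_nonneg y]
        · omega
      exact div_le_div₀ (by positivity) ((hfxb x y).trans e) hlm (hbnd x y).1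
    have h2 : |f x y * ax x y / (a x y) ^ 2| ≤
        (K * (1 + |y|)) * (2 * K * (1 + |y|) ^ m) / lm ^ 2 := by
      rw [abs_div, abs_of_pos (pow_pos (hapos x y) 2), abs_mul]
      refine div_le_div₀ (by positivity)
        (mul_le_mul (hlin x y) (haxb x y) (abs_nonneg _) (by positivity)) (by positivity) ?_
      have := (hbnd x y).1
      gcongr
    calc |w x y| ≤ _ := abs_sub _ _
      _ ≤ _ := add_le_add h1 h2
      _ = W * (1 + |y|) ^ (m + 1) := by rw [hW_def]; ring
  have hwc : Continuous fun p : ℝ × ℝ => w p.1 p.2 :=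
    (hfxc'.div hac fun p => ha0 _ _).sub
      ((hfc.mul haxc').div (hac.pow 2) fun p => pow_ne_zero 2 (ha0 _ _))
  set G : ℝ → ℝ → ℝ := fun x y => ∫ s in (0:ℝ)..y, w x s with hG_def
  have hGc : Continuous fun p : ℝ × ℝ => G p.1 p.2 :=
    intervalIntegral.continuous_parametric_primitive_of_continuous (f := w) hwc
  have hGb : ∀ x y, |G x y| ≤ W * (1 + |y|) ^ (m + 2) := by
    intro x y
    have h1 := intervalIntegral.norm_integral_le_of_norm_le_const (a := (0:ℝ)) (b := y) (f := w x)
      (C := W * (1 + |y|) ^ (m + 1)) (fun s hs => by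
        refine (hwb x s).trans ?_
        have : |s| ≤ |y| := by
          rcases Set.mem_uIoc.1 hs with h | h
          · rw [abs_of_pos h.1, abs_of_pos (h.1.trans_le h.2)]; exact h.2
          · rw [abs_of_nonpos h.2, abs_of_nonpos (h.1.le.trans h.2)]; linarith [h.1]
        gcongr)
    rw [Real.norm_eq_abs, sub_zero] at h1
    calc |G x y| ≤ _ := h1
      _ ≤ W * (1 + |y|) ^ (m + 1) * (1 + |y|) := by gcongr; linarith
      _ = _ := by ring
  set g : ℝ → ℝ → ℝ := fun x y => -(ax x y / a x y) + G x y with hg_def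
  have hgc : Continuous fun p : ℝ × ℝ => g p.1 p.2 :=
    (haxc'.div hac fun p => ha0 _ _).neg.add hGc
  have haab : ∀ x y, |ax x y / a x y| ≤ 2 * K / lm * (1 + |y|) ^ (m + 2) := by
    intro x y
    rw [abs_div, abs_of_pos (hapos x y)]
    have e : 2 * K * (1 + |y|) ^ m ≤ 2 * K * (1 + |y|) ^ (m + 2) := by
      gcongr
      · linarith [abs_nonneg y]
      · omega
    calc _ ≤ 2 * K * (1 + |y|) ^ (m + 2) / lm :=
          div_le_div₀ (by positivity) ((haxb x y).trans e) hlm (hbnd x y).1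
      _ = _ := by ring
  have hgb : ∀ x y, |g x y| ≤ (2 * K / lm + W) * (1 + |y|) ^ (m + 2) := by
    intro x y
    refine (abs_add_le _ _).trans ?_
    rw [abs_neg, add_mul]
    exact add_le_add (haab x y) (hGb x y)
  -- the density
  set ρ : ℝ → ℝ → ℝ := fun x y => rho1 (a x) (f x) y with hρ_def
  have hρd : ∀ x y, HasDerivAt (fun x => ρ x y) (ρ x y * g x y) x :=
    aux_rho_deriv a f ax fx lm W (m + 1) hlm hac hfc haxc' hfxc' had hfd
      (fun x y => (hbnd x y).1) hwb
  have hρc : Continuous fun p : ℝ × ℝ => ρ p.1 p.2 :=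
    (hac.inv₀ fun p => ha0 _ _).mul (Real.continuous_exp.comp
      (intervalIntegral.continuous_parametric_primitive_of_continuous
        (f := fun x s => f x s / a x s) (hfc.div hac fun p => ha0 _ _)))
  have hρpos : ∀ x y, 0 < ρ x y := fun x y => mul_pos (inv_pos.2 (hapos x y)) (Real.exp_pos _)
  set D : ℝ := (C + β + 2 * K) / lm with hD_def
  set B : ℝ → ℝ := fun y => lm⁻¹ * Real.exp (-(β / lp / 2) * y ^ 2 + D * |y|) with hB_def
  have hBc : Continuous B := by fun_prop
  have hρB : ∀ x y, ρ x y ≤ B y := by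
    intro x y
    have h1 := aux_Abound (β / lp) D (fun s => f x s / a x s)
      ((sl hfc x).div (sl hac x) (ha0 x))
      (fun s hs => aux_point β C K lm lp (a x s) (f x s) s hlm hβ hC hK (hbnd x s).1 (hbnd x s).2
        hs (hdis x s) (by simpa [abs_of_nonneg hs] using hlin x s))
      (fun s hs => by
        have := aux_point β C K lm lp (a x s) (-f x s) (-s) hlm hβ hC hK (hbnd x s).1 (hbnd x s).2
          (by linarith) (by linarith [hdis x s])
          (by simpa [abs_of_nonpos hs] using hlin x s)
        rw [neg_div] at this
        linarith) y
    have h2 : (a x y)⁻¹ ≤ lm⁻¹ := inv_anti₀ hlm (hbnd x y).1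
    exact mul_le_mul h2 (Real.exp_le_exp.2 h1) (Real.exp_pos _).le (by positivity)
  have hBi : ∀ j : ℕ, Integrable fun y => (1 + |y|) ^ j * B y := by
    intro j
    refine ((aux_weight_int (β / lp / 2) D (by positivity) j).const_mul lm⁻¹).congr
      (Filter.Eventually.of_forall fun y => ?_)
    simp only [hB_def]; ring
  -- integrability of polynomially bounded functions against the density
  have hint : ∀ (x M : ℝ) (n : ℕ) (u : ℝ → ℝ), Continuous u → (∀ y, |u y| ≤ M * (1 + |y|) ^ n) →
      Integrable fun y => u y * ρ x y := by
    intro x M n u hu hub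
    have hM : 0 ≤ M := by simpa using (abs_nonneg _).trans (hub 0)
    refine ((hBi n).const_mul M).mono' (hu.mul (sl hρc x)).aestronglyMeasurable
      (Filter.Eventually.of_forall fun y => ?_)
    rw [norm_mul, Real.norm_eq_abs, Real.norm_of_nonneg (hρpos x y).le, ← mul_assoc]
    exact mul_le_mul (hub y) (hρB x y) (hρpos x y).le (by positivity)
  obtain ⟨hNc, hNd⟩ := aux_param h hx ρ g B (2 * K) (2 * K / lm + W) m (m + 2) hhc hhxc' hρc hgc
    hhd hρd hhb hhxb hgb (fun x y => (hρpos x y).le) hρB hBi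
  obtain ⟨hZc, hZd⟩ := aux_param (fun _ _ => 1) (fun _ _ => 0) ρ g B 1 (2 * K / lm + W) 0 (m + 2)
    continuous_const continuous_const hρc hgc
    (fun x y => hasDerivAt_const x 1) hρd (by simp) (by simp) hgb
    (fun x y => (hρpos x y).le) hρB hBi
  simp only [zero_mul, zero_add, one_mul] at hZc hZd
  set N : ℝ → ℝ := fun x => ∫ y, h x y * ρ x y with hN_def
  set Z : ℝ → ℝ := fun x => ∫ y, ρ x y with hZ_def
  set N' : ℝ → ℝ := fun x => ∫ y, (hx x y * ρ x y + h x y * (ρ x y * g x y)) with hN'_def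
  set Z' : ℝ → ℝ := fun x => ∫ y, ρ x y * g x y with hZ'_def
  have hρi : ∀ x, Integrable (ρ x) := fun x => by
    simpa using hint x 1 0 (fun _ => 1) continuous_const (by simp)
  have hZpos : ∀ x, 0 < Z x := fun x => by
    refine (integral_pos_iff_support_of_nonneg (fun y => (hρpos x y).le) (hρi x)).2 ?_
    have : Function.support (ρ x) = Set.univ := by
      ext y; simp [(hρpos x y).ne']
    rw [this]; simp
  have hZ0 : ∀ x, Z x ≠ 0 := fun x => (hZpos x).ne'
  have hpi : ∀ x y, piDen (a x) (f x) y = ρ x y / Z x := fun x y => rfl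
  have hbar_eq : hbarX a f h = fun x => N x / Z x := by
    funext x
    change ∫ y, h x y * (ρ x y / Z x) = N x / Z x
    rw [hN_def, ← integral_div]
    congr 1; funext y; ring
  have hderiv : ∀ x, HasDerivAt (hbarX a f h) ((N' x * Z x - N x * Z' x) / Z x ^ 2) x := by
    intro x; rw [hbar_eq]; exact (hNd x).div (hZd x) (hZ0 x)
  have hNcont : Continuous N := continuous_iff_continuousAt.2 fun x => (hNd x).continuousAt
  have hZcont : Continuous Z := continuous_iff_continuousAt.2 fun x => (hZd x).continuousAt
  refine ⟨contDiff_one_iff_deriv.2 ⟨fun x => (hderiv x).differentiableAt, ?_⟩, fun x => ?_⟩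
  · rw [show deriv (hbarX a f h) = fun x => (N' x * Z x - N x * Z' x) / Z x ^ 2 from
      funext fun x => (hderiv x).deriv]
    exact ((hNc.mul hZcont).sub (hNcont.mul hZc)).div (hZcont.pow 2) fun x => pow_ne_zero 2 (hZ0 x)
  rw [(hderiv x).deriv]
  -- the mean-zero function and its primitive
  set b : ℝ := hbarX a f h x with hb_def
  have hb : b = N x / Z x := by rw [hb_def, hbar_eq]
  set q : ℝ → ℝ := fun y => (h x y - b) * (ρ x y / Z x) with hq_def
  have hqc : Continuous q := ((sl hhc x).sub continuous_const).mul ((sl hρc x).div_const _)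
  have hhbb : ∀ y, |h x y - b| ≤ (2 * K + |b|) * (1 + |y|) ^ m := by
    intro y
    have h1 : (1:ℝ) ≤ (1 + |y|) ^ m := one_le_pow₀ (by linarith [abs_nonneg y])
    have h2 := hhb x y
    have h3 := abs_sub (h x y) b
    nlinarith [abs_nonneg b]
  have hqk : ∀ (M : ℝ) (n : ℕ) (u : ℝ → ℝ), Continuous u → (∀ y, |u y| ≤ M * (1 + |y|) ^ n) →
      Integrable fun y => u y * q y := by
    intro M n u hu hub
    have hM : 0 ≤ M := by simpa using (abs_nonneg _).trans (hub 0)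
    have := (hint x (M * (2 * K + |b|)) (n + m) (fun y => u y * (h x y - b))
      (hu.mul ((sl hhc x).sub continuous_const)) (fun y => by
        rw [abs_mul]
        calc _ ≤ (M * (1 + |y|) ^ n) * ((2 * K + |b|) * (1 + |y|) ^ m) :=
              mul_le_mul (hub y) (hhbb y) (abs_nonneg _) (by positivity)
          _ = _ := by ring)).div_const (Z x)
    refine this.congr (Filter.Eventually.of_forall fun y => ?_)
    simp only [hq_def]; ring
  have hqi : Integrable q := by
    simpa using hqk 1 0 (fun _ => 1) continuous_const (by simp)
  have hqp : ∀ k : ℕ, Integrable fun y => (1 + |y|) ^ k * q y := fun k =>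
    hqk 1 k (fun y => (1 + |y|) ^ k) (by fun_prop) (fun y => by
      rw [abs_of_nonneg (by positivity), one_mul])
  have hhρi : Integrable fun y => h x y * ρ x y := hint x (2 * K) m (h x) (sl hhc x) (hhb x)
  have hq0 : ∫ y, q y = 0 := by
    have e : q = fun y => (h x y * ρ x y) / Z x - b / Z x * ρ x y := by
      funext y; simp only [hq_def]; ring
    rw [e, integral_sub (hhρi.div_const _) ((hρi x).const_mul _), integral_div, integral_const_mul]
    change N x / Z x - b / Z x * Z x = 0
    rw [hb]; have := hZ0 x; field_simp; ring
  set F : ℝ → ℝ := fun y => ∫ s in Set.Iic y, q s with hF_def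
  have hFi : ∀ (P : ℝ → ℝ) (M : ℝ) (n : ℕ), Continuous P → (∀ y, |P y| ≤ M * (1 + |y|) ^ n) →
      Integrable fun y => F y * P y := fun P M n hP hPb =>
    aux_F_int q P hqc hP hqi hq0 hqp M n hPb
  have hFw : Integrable fun y => F y * w x y := hFi _ W (m + 1) (sl hwc x) (hwb x)
  have hqG : Integrable fun y => q y * G x y :=
    (hqk W (m + 2) (G x) (sl hGc x) (hGb x)).congr
      (Filter.Eventually.of_forall fun y => mul_comm _ _)
  have hibp : ∫ y, F y * w x y = - ∫ y, q y * G x y :=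
    integral_mul_deriv_eq_deriv_mul_of_integrable (u := F) (v := G x) (u' := q) (v' := w x)
      (fun y _ => aux_F_deriv q hqc hqi y)
      (fun y _ => intervalIntegral.integral_hasDerivAt_right ((sl hwc x).intervalIntegrable _ _)
        ((sl hwc x).stronglyMeasurableAtFilter _ _) (sl hwc x).continuousAt)
      hFw hqG (hFi _ W (m + 2) (sl hGc x) (hGb x))
  have haac : Continuous fun y => ax x y / a x y := (sl haxc' x).div (sl hac x) (ha0 x)
  have hqa : Integrable fun y => ax x y / a x y * q y :=
    hqk _ (m + 2) _ haac (haab x)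
  have hhxi : Integrable fun y => hx x y * ρ x y / Z x :=
    (hint x (2 * K) m (hx x) (sl hhxc' x) (hhxb x)).div_const _
  -- right-hand side
  have hR : ∀ y, (hx x y - fx x y * vyX a f h x y - ax x y * vyyX a f h x y) *
      piDen (fun z => a x z) (fun z => f x z) y
      = (hx x y * ρ x y / Z x - ax x y / a x y * q y) - F y * w x y := by
    intro y
    have e1 : vyX a f h x y = F y / (a x y * (ρ x y / Z x)) := rfl
    have e2 : vyyX a f h x y = (h x y - b) / a x y -
      f x y * F y / ((a x y) ^ 2 * (ρ x y / Z x)) := rfl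
    have e3 : piDen (fun z => a x z) (fun z => f x z) y = ρ x y / Z x := rfl
    rw [e1, e2, e3]
    have n1 := ha0 x y
    have n2 := (hρpos x y).ne'
    have n3 := hZ0 x
    simp only [hw_def, hq_def]
    generalize F y = Fy
    clear_value ρ Z
    field_simp
    ring
  have hRI : ∫ y, (hx x y - fx x y * vyX a f h x y - ax x y * vyyX a f h x y) *
      piDen (fun z => a x z) (fun z => f x z) y
      = (∫ y, hx x y * ρ x y / Z x) - (∫ y, ax x y / a x y * q y) + ∫ y, q y * G x y := by
    simp_rw [hR]
    have hd : Integrable fun y => hx x y * ρ x y / Z x - ax x y / a x y * q y := hhxi.sub hqa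
    rw [integral_sub hd hFw, integral_sub hhxi hqa, hibp]
    ring
  refine Eq.trans ?_ (hRI.symm.trans (by simp only [hhx_def, hfx_def, hax_def]))
  -- left-hand side
  have hρg : Integrable fun y => ρ x y * g x y :=
    (hint x _ _ (g x) (sl hgc x) (hgb x)).congr
      (Filter.Eventually.of_forall fun y => mul_comm _ _)
  have hqg : Integrable fun y => q y * g x y :=
    (hqk _ _ (g x) (sl hgc x) (hgb x)).congr
      (Filter.Eventually.of_forall fun y => mul_comm _ _)
  have hL1 : N' x / Z x - b / Z x * Z' x
      = (∫ y, hx x y * ρ x y / Z x) + ∫ y, q y * g x y := by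
    have hN'i : Integrable fun y => hx x y * ρ x y + h x y * (ρ x y * g x y) := by
      have := ((hhxi.add hqg).add (hρg.const_mul (b / Z x))).const_mul (Z x)
      refine this.congr (Filter.Eventually.of_forall fun y => ?_)
      have n3 := hZ0 x
      simp only [hq_def, Pi.add_apply]
      clear_value Z
      field_simp
      ring
    rw [← integral_add hhxi hqg]
    simp only [hN'_def, hZ'_def]
    rw [← integral_div, ← integral_const_mul, ← integral_sub (hN'i.div_const _) (hρg.const_mul _)]
    congr 1; funext y
    simp only [hq_def]
    ring
  have hL2 : ∫ y, q y * g x y = -(∫ y, ax x y / a x y * q y) + ∫ y, q y * G x y := by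
    have hd : Integrable fun y => -(ax x y / a x y * q y) := hqa.neg
    rw [← integral_neg, ← integral_add hd hqG]
    congr 1; funext y
    simp only [hg_def]
    ring
  have hL3 : (N' x * Z x - N x * Z' x) / Z x ^ 2 = N' x / Z x - b / Z x * Z' x := by
    rw [hb]; have := hZ0 x
    clear_value Z Z' N N'
    field_simp
  rw [hL3, hL1, hL2]
  ring

end
end
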